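/- arXiv:math/0612222 — 2 statements merged into one kernel-verified Lean document; each statement's English description precedes it below -/
import Mathlib

section
/- Improved Shenitzer theorem: let G = F₁ *_⟨t⟩ F₂ with F₁, F₂ free of finite ranks n and m and t a nontrivial element of both factors. If t is indivisible (not a proper power) in at least one of F₁, F₂, and G admits a surjection onto a free group of rank n + m − 1, then G is free (of rank n + m − 1). -/
/-- `x` is indivisible in the group `F`: whenever `x = h^k` then `k = ±1`. -/
def Indivisible {F : Type} [Group F] (x : F) : Prop :=
  ∀ (h : F) (k : ℤ), h ^ k = x → k = 1 ∨ k = -1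

/-- The amalgamated free product `F₁ *_{t₁ = t₂} F₂` of two free groups over
the cyclic subgroups generated by `t₁` and `t₂`. -/
abbrev Amalgam {n m : ℕ} (t₁ : FreeGroup (Fin n)) (t₂ : FreeGroup (Fin m)) : Type :=
  (Monoid.Coprod (FreeGroup (Fin n)) (FreeGroup (Fin m))) ⧸
    Subgroup.normalClosure {Monoid.Coprod.inl t₁ * (Monoid.Coprod.inr t₂)⁻¹}

/-!
Let `α : F(X) → F(Z)` and `β : F(Y) → F(Z)` be the restrictions to the two factors of a surjection
from the amalgam, so that `|Z| + 1 = |X| + |Y|`. Counting homomorphisms to a finite `p`-group shows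
that, for a suitable prime `p`, every pair of homomorphisms from the factors to a finite `p`-group
that agrees on `t` factors through `F(Z)`. If `t` is indivisible in both factors, then `⟨t⟩` is its
own centralizer, hence closed in the pro-`p` topologies, and lifts of such pairs to wreath
products with `ℤ/p` show that a reduced word of the amalgam has nontrivial image in `F(Z)`.

If `t` is indivisible in `F(X)` only, write it as a power of an indivisible element of `F(Y)` and
remove the prime factors `p` of the exponent one at a time: adjoining to the image of `α` the `p`-th
root of `t` present in the image of `β` gives, by comparing ranks, a free group of rank `|X|`
again. It is the amalgam of `F(X)` with the infinite cyclic group generated by the root, and the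
root is indivisible in it.
-/

namespace Shenitzer

/-! ### Homomorphisms to finite `p`-groups -/

theorem isPGroup_pi {p : ℕ} [Fact p.Prime] {ι : Type*} [Finite ι] {P : ι → Type*} [∀ i, Group (P i)]
    [∀ i, Finite (P i)] (hP : ∀ i, IsPGroup p (P i)) : IsPGroup p (∀ i, P i) := by
  have := Fintype.ofFinite ι
  choose a ha using fun i => IsPGroup.iff_card.1 (hP i)
  exact .of_card (n := ∑ i, a i) (by rw [Nat.card_pi, Finset.prod_congr rfl fun i _ => ha i,
    Finset.prod_pow_eq_pow_sum])

/-- A homomorphism from `F` to a finite `p`-group, bundled with its target. These are the test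
maps by which elements of `F` are told apart; `Q'` sees at least as much as `Q` when
`Q'.hom.ker ≤ Q.hom.ker`. -/
structure PGroupHom (p : ℕ) (F : Type*) [Group F] where
  carrier : Type
  [group : Group carrier]
  [finite : Finite carrier]
  isPGroup : IsPGroup p carrier
  hom : F →* carrier

namespace PGroupHom

attribute [instance] group finite

variable {p : ℕ} {F : Type*} [Group F]

instance : Inhabited (PGroupHom p F) :=
  ⟨{ carrier := PUnit, isPGroup := .of_subsingleton _ _, hom := 1 }⟩

/-- The product of finitely many homomorphisms to finite `p`-groups. -/
def pi [Fact p.Prime] {ι : Type} [Finite ι] (Q : ι → PGroupHom p F) : PGroupHom p F where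
  carrier := ∀ i, (Q i).carrier
  isPGroup := isPGroup_pi fun i => (Q i).isPGroup
  hom := MonoidHom.pi fun i => (Q i).hom

theorem ker_pi_le [Fact p.Prime] {ι : Type} [Finite ι] (Q : ι → PGroupHom p F) (i : ι) :
    (pi Q).hom.ker ≤ (Q i).hom.ker :=
  fun _ hg => congrFun hg i

theorem notMem_zpowers_mono {Q Q' : PGroupHom p F} (hQ : Q'.hom.ker ≤ Q.hom.ker) {g t : F}
    (hg : Q.hom g ∉ Subgroup.zpowers (Q.hom t)) : Q'.hom g ∉ Subgroup.zpowers (Q'.hom t) := by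
  rintro ⟨k, hk : Q'.hom t ^ k = Q'.hom g⟩
  refine hg ⟨k, ?_⟩
  have hmem : t ^ k * g⁻¹ ∈ Q.hom.ker := hQ (by simp [MonoidHom.mem_ker, hk])
  simpa [MonoidHom.mem_ker, mul_inv_eq_one] using hmem

theorem exists_forall_notMem_zpowers [Fact p.Prime] {ι : Type} [Finite ι] {g : ι → F} {t : F}
    (h : ∀ i, ∃ Q : PGroupHom p F, Q.hom (g i) ∉ Subgroup.zpowers (Q.hom t)) :
    ∃ Q : PGroupHom p F, ∀ i, Q.hom (g i) ∉ Subgroup.zpowers (Q.hom t) := by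
  choose Q hQ using h
  exact ⟨pi Q, fun i => notMem_zpowers_mono (ker_pi_le Q i) (hQ i)⟩

/-- The first `n` terms of `u` lie in pairwise distinct left cosets of `⟨t⟩` after applying `Q`. -/
def Separates (Q : PGroupHom p F) (t : F) (u : ℕ → F) (n : ℕ) : Prop :=
  ∀ ⦃i j⦄, i < j → j < n → Q.hom ((u i)⁻¹ * u j) ∉ Subgroup.zpowers (Q.hom t)

/-- A sequence can be separated term by term: it is enough to be able to pull the term `u k` off
the unique earlier term whose coset it falls into. -/
theorem exists_separates {t : F} {u : ℕ → F} {n : ℕ} (Q₀ : PGroupHom p F)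
    (step : ∀ Q : PGroupHom p F, Q.hom.ker ≤ Q₀.hom.ker → ∀ j k, j < k → k < n →
      Q.Separates t u k → Q.hom ((u j)⁻¹ * u k) ∈ Subgroup.zpowers (Q.hom t) →
      ∃ Q' : PGroupHom p F, Q'.hom.ker ≤ Q.hom.ker ∧
        Q'.hom ((u j)⁻¹ * u k) ∉ Subgroup.zpowers (Q'.hom t)) :
    ∃ Q : PGroupHom p F, Q.hom.ker ≤ Q₀.hom.ker ∧ Q.Separates t u n := by
  suffices ∀ k ≤ n, ∃ Q : PGroupHom p F, Q.hom.ker ≤ Q₀.hom.ker ∧ Q.Separates t u k from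
    this n le_rfl
  intro k
  induction k with
  | zero => exact fun _ => ⟨Q₀, le_rfl, fun _ _ _ hj => absurd hj (Nat.not_lt_zero _)⟩
  | succ k ih =>
    intro hk
    obtain ⟨Q, hQ₀, hQ⟩ := ih (by omega)
    by_cases hsep : Q.Separates t u (k + 1)
    · exact ⟨Q, hQ₀, hsep⟩
    obtain ⟨j, hjk, hj⟩ :
        ∃ j < k, Q.hom ((u j)⁻¹ * u k) ∈ Subgroup.zpowers (Q.hom t) := by
      by_contra! hnone
      refine hsep fun i l hil hl => ?_
      obtain hl | rfl := Nat.lt_succ_iff_lt_or_eq.1 hl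
      exacts [hQ hil hl, hnone i hil]
    obtain ⟨Q', hle, hj'⟩ := step Q hQ₀ j k hjk hk hQ hj
    refine ⟨Q', hle.trans hQ₀, fun i l hil hl hmem => ?_⟩
    obtain hl | rfl := Nat.lt_succ_iff_lt_or_eq.1 hl
    · exact notMem_zpowers_mono hle (hQ hil hl) hmem
    obtain rfl | hij := eq_or_ne i j
    · exact hj' hmem
    have hQmem : Q.hom ((u i)⁻¹ * u l) ∈ Subgroup.zpowers (Q.hom t) :=
      by_contra fun h => notMem_zpowers_mono hle h hmem
    have hQij : Q.hom ((u i)⁻¹ * u j) ∈ Subgroup.zpowers (Q.hom t) := by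
      simpa [mul_assoc] using mul_mem hQmem (inv_mem hj)
    obtain hij | hji := hij.lt_or_gt
    · exact hQ hij hjk hQij
    · exact hQ hji hil (by simpa using inv_mem hQij)

end PGroupHom

/-! ### Marking an edge of a Cayley graph -/

/-- The wreath product `ℤ/p ≀ P`: a function `P → ℤ/p`, thought of as a flow through the edges of
the Cayley graph of `P` with one fixed label, together with an element of `P`. -/
abbrev Wreath (p : ℕ) (P : Type*) := Multiplicative (ZMod p) ≀ᵣ P

theorem isPGroup_wreath {p : ℕ} [Fact p.Prime] {P : Type*} [Group P] [Finite P]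
    (hP : IsPGroup p P) : IsPGroup p (Wreath p P) := by
  obtain ⟨b, hb⟩ := IsPGroup.iff_card.1 hP
  refine .of_card (n := p ^ b + b) ?_
  rw [RegularWreathProduct.card, hb, pow_add]
  simp

section CosetSum

variable {p : ℕ} {P : Type*} [Group P]

/-- The total flow of `w` out of the right coset `H * g₀`. -/
noncomputable def cosetSum (H : Subgroup P) (g₀ : P) (w : Wreath p P) : ZMod p :=
  ∑ᶠ h : H, (w.left (h * g₀)).toAdd

variable (H : Subgroup P) (g₀ : P)

@[simp]
theorem cosetSum_one : cosetSum H g₀ (1 : Wreath p P) = 0 := by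
  simp [cosetSum]

variable [Finite P]

theorem cosetSum_mul (a b : Wreath p P) :
    cosetSum H g₀ (a * b) =
      cosetSum H g₀ a + ∑ᶠ h : H, (b.left (a.right⁻¹ * (h * g₀))).toAdd := by
  simp only [cosetSum, RegularWreathProduct.mul_left, Pi.mul_apply, toAdd_mul]
  exact finsum_add_distrib (Set.toFinite _) (Set.toFinite _)

theorem cosetSum_mul_of_mem {a : Wreath p P} (ha : a.right ∈ H) (b : Wreath p P) :
    cosetSum H g₀ (a * b) = cosetSum H g₀ a + cosetSum H g₀ b := by
  rw [cosetSum_mul, add_right_inj, cosetSum,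
    ← finsum_comp_equiv (Equiv.mulLeft (⟨a.right, ha⟩ : H))]
  simp [mul_assoc]

theorem cosetSum_pow {a : Wreath p P} (ha : a.right ∈ H) (k : ℕ) :
    cosetSum H g₀ (a ^ k) = k * cosetSum H g₀ a := by
  induction k with
  | zero => simp
  | succ k ih =>
    rw [pow_succ', cosetSum_mul_of_mem H g₀ ha, ih]
    push_cast
    ring

end CosetSum

section EdgeHom

variable (p : ℕ) {X P : Type*} [Group P] (f : FreeGroup X →* P) (x₀ : X)

open Classical in
/-- The lift of `f` to the wreath product that records, for every path in the Cayley graph of `P`,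
how often the path crosses the `x₀`-edges, sorted by their origin. -/
noncomputable def edgeHom : FreeGroup X →* Wreath p P :=
  FreeGroup.lift fun x => ⟨fun g => if x = x₀ ∧ g = 1 then .ofAdd 1 else 1, f (.of x)⟩

@[simp]
theorem edgeHom_right (g : FreeGroup X) : (edgeHom p f x₀ g).right = f g := by
  have : RegularWreathProduct.rightHom.comp (edgeHom p f x₀) = f := by
    ext x
    simp [edgeHom]
  exact DFunLike.congr_fun this g

theorem ker_edgeHom_le : (edgeHom p f x₀).ker ≤ f.ker := fun g hg => by
  rw [MonoidHom.mem_ker] at hg ⊢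
  rw [← edgeHom_right p f x₀, hg, RegularWreathProduct.one_right]

/-- The test map obtained from `Q` by additionally counting passages through the `x₀`-edges. -/
noncomputable def PGroupHom.edge {p : ℕ} [Fact p.Prime] (Q : PGroupHom p (FreeGroup X)) (x₀ : X) :
    PGroupHom p (FreeGroup X) where
  carrier := Wreath p Q.carrier
  isPGroup := isPGroup_wreath Q.isPGroup
  hom := edgeHom p Q.hom x₀

variable [Finite P] (H : Subgroup P) (g₀ : P)

open Classical in
theorem cosetSum_edgeHom_mul_of (v : FreeGroup X) (x : X) :
    cosetSum H g₀ (edgeHom p f x₀ (v * .of x)) =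
      cosetSum H g₀ (edgeHom p f x₀ v) + if x = x₀ ∧ f v * g₀⁻¹ ∈ H then 1 else 0 := by
  have hleft : ∀ h : H, ((edgeHom p f x₀ (.of x)).left ((f v)⁻¹ * (h * g₀))).toAdd =
      if x = x₀ ∧ f v * g₀⁻¹ = h then 1 else 0 := fun h => by
    simp only [edgeHom, FreeGroup.lift_apply_of, apply_ite Multiplicative.toAdd, toAdd_ofAdd,
      toAdd_one, inv_mul_eq_one, mul_inv_eq_iff_eq_mul]
  rw [map_mul, cosetSum_mul, edgeHom_right, add_right_inj, finsum_congr hleft]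
  split_ifs with hx
  · rw [finsum_eq_single _ (⟨f v * g₀⁻¹, hx.2⟩ : H)]
    · exact if_pos ⟨hx.1, rfl⟩
    · exact fun h hh => if_neg fun hx' => hh (Subtype.ext hx'.2.symm)
  · exact finsum_eq_zero_of_forall_eq_zero fun h =>
      if_neg fun ⟨hlabel, hh⟩ => hx ⟨hlabel, hh ▸ h.2⟩

/-- The origin of the edge crossed by the letter `a` starting at `v`: crossing an edge backwards
ends at its origin. -/
def edgeOrigin (v : FreeGroup X) (a : X × Bool) : FreeGroup X :=
  bif a.2 then v else v * .mk [a]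

open Classical in
theorem cosetSum_edgeHom_mul_mk (v : FreeGroup X) (a : X × Bool) :
    cosetSum H g₀ (edgeHom p f x₀ (v * .mk [a])) =
      cosetSum H g₀ (edgeHom p f x₀ v) +
        if a.1 = x₀ ∧ f (edgeOrigin v a) * g₀⁻¹ ∈ H then (bif a.2 then 1 else -1) else 0 := by
  obtain ⟨x, _ | _⟩ := a
  · have h := cosetSum_edgeHom_mul_of p f x₀ H g₀ (v * .mk [(x, false)]) x
    rw [show v * .mk [(x, false)] * .of x = v from inv_mul_cancel_right v (.of x)] at h
    rw [h, add_assoc, left_eq_add, show edgeOrigin v (x, false) = v * .mk [(x, false)] from rfl]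
    by_cases hx : x = x₀ ∧ f (v * .mk [(x, false)]) * g₀⁻¹ ∈ H
    · rw [if_pos hx, if_pos hx, cond_false, add_neg_cancel]
    · rw [if_neg hx, if_neg hx, add_zero]
  · exact cosetSum_edgeHom_mul_of p f x₀ H g₀ v x

theorem edgeOrigin_mul_inv {X : Type*} (v w : FreeGroup X) (x : X) (b c : Bool) :
    edgeOrigin v (x, b) * (edgeOrigin w (x, c))⁻¹ =
      v * (if b = c then w else w * .mk [(x, c)])⁻¹ := by
  have hfalse : (.mk [(x, false)] : FreeGroup X) = (.of x)⁻¹ := rfl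
  have htrue : (.mk [(x, true)] : FreeGroup X) = .of x := rfl
  cases b <;> cases c <;> simp [edgeOrigin, hfalse, htrue, mul_assoc]

theorem mk_take_succ {X : Type*} (W : List (X × Bool)) (i : ℕ) (hi : i < W.length) :
    FreeGroup.mk (W.take (i + 1)) = .mk (W.take i) * .mk [W[i]] := by
  rw [FreeGroup.mul_mk, List.take_succ_eq_append_getElem hi]

/-- A reduced path that is simple modulo `H` crosses the `H`-orbit of its first edge only once. -/
theorem cosetSum_edgeHom_ne_zero [Fact p.Prime] {W : List (X × Bool)} (hne : 0 < W.length)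
    (hred : FreeGroup.IsReduced W)
    (hsimple : ∀ i j, i < j → j < W.length →
      f (.mk (W.take j)) * (f (.mk (W.take i)))⁻¹ ∉ H) :
    cosetSum H (f (edgeOrigin 1 W[0])) (edgeHom p f W[0].1 (.mk W)) ≠ 0 := by
  suffices key : ∀ i, i < W.length → cosetSum H (f (edgeOrigin 1 W[0]))
      (edgeHom p f W[0].1 (.mk (W.take (i + 1)))) = bif W[0].2 then 1 else -1 by
    have h := key (W.length - 1) (by omega)
    rw [Nat.sub_add_cancel hne, List.take_length] at h
    rw [h]
    cases W[0].2 <;> simp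
  have hfirst : FreeGroup.mk (W.take 1) = .mk [W[0]] := by
    rw [mk_take_succ W 0 hne, List.take_zero, ← FreeGroup.one_eq_mk, one_mul]
  intro i
  induction i with
  | zero =>
    intro _
    rw [hfirst, ← one_mul (FreeGroup.mk [W[0]]), cosetSum_edgeHom_mul_mk]
    simp
  | succ i ih =>
    intro hi
    rw [mk_take_succ W (i + 1) hi, cosetSum_edgeHom_mul_mk, ih (by omega), add_eq_left, if_neg]
    rintro ⟨hlabel, hmem⟩
    have hWi : W[i + 1] = (W[0].1, W[i + 1].2) := Prod.ext hlabel rfl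
    rw [hWi, ← map_inv, ← map_mul, edgeOrigin_mul_inv, map_mul, map_inv] at hmem
    split_ifs at hmem with hb
    · exact hsimple 0 (i + 1) (by omega) hi hmem
    · obtain rfl | hi0 := Nat.eq_zero_or_pos i
      · exact hb (List.isChain_iff_getElem.1 hred 0 hi hlabel.symm).symm
      · rw [one_mul, ← hfirst] at hmem
        exact hsimple 1 (i + 1) (by omega) hi hmem

end EdgeHom

/-! ### Free groups are residually `p`-finite -/

section ResiduallyP

variable (p : ℕ) [Fact p.Prime] {X : Type*}

theorem mk_take_add (W : List (X × Bool)) (i j : ℕ) :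
    FreeGroup.mk (W.take (i + j)) = .mk (W.take i) * .mk ((W.drop i).take j) := by
  rw [FreeGroup.mul_mk, List.take_add]

theorem exists_separates_mk_take {W : List (X × Bool)} (hW : FreeGroup.IsReduced W) :
    ∃ Q : PGroupHom p (FreeGroup X), Q.Separates 1 (fun i => .mk (W.take i)) (W.length + 1) := by
  refine (PGroupHom.exists_separates default ?_).imp fun Q hQ => hQ.2
  intro Q _ j k hjk hk hsep _
  obtain ⟨d, rfl⟩ := Nat.exists_eq_add_of_lt hjk
  set V := (W.drop j).take (d + 1) with hV
  have hlen : V.length = d + 1 := by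
    rw [hV, List.length_take, List.length_drop]
    omega
  have htake : ∀ i ≤ d + 1, FreeGroup.mk (W.take (j + i)) = .mk (W.take j) * .mk (V.take i) :=
    fun i hi => by rw [mk_take_add, hV, List.take_take, min_eq_left hi]
  refine ⟨Q.edge V[0].1, ker_edgeHom_le .., fun hmem => ?_⟩
  simp only [map_one, Subgroup.zpowers_one_eq_bot, Subgroup.mem_bot] at hmem
  rw [add_assoc, htake _ le_rfl, inv_mul_cancel_left, List.take_of_length_le hlen.le] at hmem
  refine cosetSum_edgeHom_ne_zero p Q.hom ⊥ (W := V) (by omega) ((hW.drop j).take (d + 1)) ?_ ?_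
  · intro i i' hii' hi' hbot
    rw [Subgroup.mem_bot, mul_inv_eq_one] at hbot
    refine hsep (i := j + i) (j := j + i') (by omega) (by omega) ?_
    simp only [htake i (by omega), htake i' (by omega), map_mul, map_inv, hbot]
    simp
  · exact (congrArg _ hmem).trans (cosetSum_one ⊥ _)

theorem exists_hom_ne_one {g : FreeGroup X} (hg : g ≠ 1) :
    ∃ Q : PGroupHom p (FreeGroup X), Q.hom g ≠ 1 := by
  classical
  obtain ⟨Q, hQ⟩ := exists_separates_mk_take p (FreeGroup.isReduced_toWord (x := g))
  have hlen : 0 < g.toWord.length :=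
    List.length_pos_iff.2 fun h => hg (FreeGroup.toWord_eq_nil_iff.1 h)
  refine ⟨Q, fun hg' => hQ hlen (Nat.lt_succ_self _) ?_⟩
  simp only [List.take_zero, List.take_length, FreeGroup.mk_toWord, ← FreeGroup.one_eq_mk]
  simp [hg']

theorem exists_hom_forall_ne_one {ι : Type} [Finite ι] {g : ι → FreeGroup X}
    (hg : ∀ i, g i ≠ 1) : ∃ Q : PGroupHom p (FreeGroup X), ∀ i, Q.hom (g i) ≠ 1 := by
  obtain ⟨Q, hQ⟩ := PGroupHom.exists_forall_notMem_zpowers (p := p) (g := g) (t := 1)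
    fun i => by simpa using exists_hom_ne_one p (hg i)
  exact ⟨Q, fun i => by simpa using hQ i⟩

end ResiduallyP

/-! ### Roots in free groups -/

section Roots

variable {X : Type*}

theorem subsingleton_of_commute_of {z : FreeGroup X} (hz : z ≠ 1)
    (hcomm : ∀ x, Commute (.of x) z) : Subsingleton X := by
  classical
  obtain ⟨a, L, hW⟩ := List.exists_cons_of_ne_nil (mt FreeGroup.toWord_eq_nil_iff.1 hz)
  suffices hletter : ∀ y, y = a.1 from ⟨fun x y => (hletter x).trans (hletter y).symm⟩
  intro y
  by_contra hy
  have hred : FreeGroup.IsReduced ((y, true) :: a :: L) :=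
    List.isChain_cons_cons.2 ⟨fun h => absurd h hy, hW ▸ FreeGroup.isReduced_toWord⟩
  have hword : (FreeGroup.of y * z).toWord = (y, true) :: a :: L := by
    rw [← FreeGroup.mk_toWord (x := z), hW, FreeGroup.of, FreeGroup.mul_mk, FreeGroup.toWord_mk]
    exact hred.reduce_eq
  have hsub := FreeGroup.toWord_mul_sublist z (FreeGroup.of y)
  rw [← (hcomm y).eq, hword, hW, FreeGroup.toWord_of] at hsub
  have heq := hsub.eq_of_length (by simp)
  exact hy (congrArg Prod.fst (List.cons.inj heq).1)

theorem isCyclic_freeGroup [Subsingleton X] : IsCyclic (FreeGroup X) := by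
  obtain h | ⟨⟨x⟩⟩ := isEmpty_or_nonempty X
  · infer_instance
  · have := uniqueOfSubsingleton x
    infer_instance

theorem isCyclic_centralizer {t : FreeGroup X} (ht : t ≠ 1) :
    IsCyclic (Subgroup.centralizer {t}) := by
  let C := Subgroup.centralizer {t}
  let e := IsFreeGroup.mulEquiv C
  let tC : C := ⟨t, Subgroup.mem_centralizer_singleton_iff.2 rfl⟩
  have hgen : Subsingleton (IsFreeGroup.Generators C) := by
    refine subsingleton_of_commute_of (z := e.symm tC) ?_ fun x => ?_
    · simpa [tC, Subtype.ext_iff] using ht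
    · have hcomm : Commute (e (.of x)) tC :=
        Subtype.ext (Subgroup.mem_centralizer_singleton_iff.1 (e (.of x)).2)
      simpa using hcomm.map e.symm
  have := isCyclic_freeGroup (X := IsFreeGroup.Generators C)
  exact isCyclic_of_surjective e e.surjective

theorem exists_mem_zpowers_of_commute {t : FreeGroup X} (ht : t ≠ 1) :
    ∃ t₀ : FreeGroup X, ∀ a, Commute a t → a ∈ Subgroup.zpowers t₀ := by
  obtain ⟨⟨t₀, _⟩, hgen⟩ := (isCyclic_centralizer ht).exists_generator
  refine ⟨t₀, fun a ha => ?_⟩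
  obtain ⟨k, hk⟩ := hgen ⟨a, Subgroup.mem_centralizer_singleton_iff.2 ha⟩
  exact ⟨k, congrArg Subtype.val hk⟩

theorem zpow_right_injective {t : FreeGroup X} (ht : t ≠ 1) :
    Function.Injective fun k : ℤ => t ^ k :=
  injective_zpow_iff_not_isOfFinOrder.2 (not_isOfFinOrder_of_isMulTorsionFree ht)

end Roots

section Indivisible

variable {F : Type} [Group F] {X : Type}

theorem _root_.Indivisible.ne_one {t : F} (ht : Indivisible t) : t ≠ 1 := fun h => by
  have := ht 1 0 (by simp [h])
  omega

theorem _root_.Indivisible.inv {t : F} (ht : Indivisible t) : Indivisible t⁻¹ := fun h k hk => by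
  have := ht h (-k) (by rw [zpow_neg, hk, inv_inv])
  omega

theorem _root_.Indivisible.of_conj {t c : F} (ht : Indivisible (c * t * c⁻¹)) : Indivisible t :=
  fun h k hk => ht (c * h * c⁻¹) k (by rw [conj_zpow, hk])

theorem _root_.Indivisible.mem_zpowers_of_commute {t a : FreeGroup X} (ht : Indivisible t)
    (ha : Commute a t) : a ∈ Subgroup.zpowers t := by
  obtain ⟨t₀, ht₀⟩ := exists_mem_zpowers_of_commute ht.ne_one
  obtain ⟨k, hk : t₀ ^ k = t⟩ := ht₀ t (Commute.refl t)
  obtain rfl | rfl := ht t₀ k hk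
  · simpa [← hk] using ht₀ a ha
  · simpa [← hk] using ht₀ a ha

theorem exists_indivisible_zpow_eq {t : FreeGroup X} (ht : t ≠ 1) :
    ∃ (t₀ : FreeGroup X) (k : ℤ), Indivisible t₀ ∧ t₀ ^ k = t := by
  obtain ⟨t₀, ht₀⟩ := exists_mem_zpowers_of_commute ht
  obtain ⟨j, hj : t₀ ^ j = t⟩ := ht₀ t (Commute.refl t)
  refine ⟨t₀, j, fun h k hk => ?_, hj⟩
  have hcomm : Commute h t := by
    rw [← hj, ← hk]
    exact ((Commute.refl h).zpow_right k).zpow_right j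
  obtain ⟨i, hi : t₀ ^ i = h⟩ := ht₀ h hcomm
  have ht₀_ne : t₀ ≠ 1 := by
    rintro rfl
    exact ht (by simpa using hj.symm)
  have hik : i * k = 1 := zpow_right_injective ht₀_ne (by simp [zpow_mul, hi, hk])
  exact Int.eq_one_or_neg_one_of_mul_eq_one (mul_comm i k ▸ hik)

theorem exists_indivisible_pow_eq {t : FreeGroup X} (ht : t ≠ 1) :
    ∃ (t₀ : FreeGroup X) (k : ℕ), Indivisible t₀ ∧ t₀ ^ k = t := by
  obtain ⟨t₀, k, hind, hk⟩ := exists_indivisible_zpow_eq ht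
  obtain ⟨n, rfl | rfl⟩ := k.eq_nat_or_neg
  · exact ⟨t₀, n, hind, by simpa using hk⟩
  · exact ⟨t₀⁻¹, n, hind.inv, by simpa using hk⟩

theorem isReduced_flatten_replicate_append_take {W : List (X × Bool)}
    (hW : FreeGroup.IsCyclicallyReduced W) (c i : ℕ) :
    FreeGroup.IsReduced ((List.replicate c W).flatten ++ W.take i) := by
  have h : FreeGroup.IsReduced (List.replicate (c + 1) W).flatten :=
    (hW.flatten_replicate (c + 1)).isReduced
  rw [List.replicate_succ', List.flatten_concat, ← List.take_append_drop i W,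
    ← List.append_assoc, List.take_append_drop i W] at h
  exact h.left_of_append

theorem mk_pow (W : List (X × Bool)) (c : ℕ) :
    FreeGroup.mk W ^ c = FreeGroup.mk (List.replicate c W).flatten := by
  induction c with
  | zero => rfl
  | succ c ih => rw [pow_succ', ih, FreeGroup.mul_mk, List.replicate_succ, List.flatten_cons]

theorem eq_of_mk_pow_mul_mk_take {W : List (X × Bool)} (hW : FreeGroup.IsCyclicallyReduced W)
    {c i j : ℕ} (hi : i < W.length) (hj : j < W.length)
    (h : FreeGroup.mk W ^ c * .mk (W.take j) = .mk (W.take i)) : i = j := by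
  classical
  have hlen := congrArg FreeGroup.norm h
  rw [mk_pow, FreeGroup.mul_mk, FreeGroup.norm, FreeGroup.norm, FreeGroup.toWord_mk,
    FreeGroup.toWord_mk, (isReduced_flatten_replicate_append_take hW c j).reduce_eq,
    (show FreeGroup.IsReduced (W.take i) from hW.isReduced.take i).reduce_eq] at hlen
  simp only [List.length_append, List.length_flatten, List.map_replicate, List.sum_replicate,
    List.length_take, smul_eq_mul, min_eq_left hi.le, min_eq_left hj.le] at hlen
  obtain rfl | hc := Nat.eq_zero_or_pos c
  · omega
  · nlinarith

theorem mk_take_mul_inv_notMem_zpowers {W : List (X × Bool)}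
    (hW : FreeGroup.IsCyclicallyReduced W) {i j : ℕ} (hij : i < j) (hj : j < W.length) :
    FreeGroup.mk (W.take j) * (.mk (W.take i))⁻¹ ∉ Subgroup.zpowers (FreeGroup.mk W) := by
  rintro ⟨c, hc : FreeGroup.mk W ^ c = _⟩
  obtain ⟨n, rfl | rfl⟩ := c.eq_nat_or_neg
  · rw [zpow_natCast, eq_mul_inv_iff_mul_eq] at hc
    exact hij.ne' (eq_of_mk_pow_mul_mk_take hW hj (hij.trans hj) hc)
  · rw [zpow_neg, zpow_natCast, inv_eq_iff_eq_inv, mul_inv_rev, inv_inv,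
      eq_mul_inv_iff_mul_eq] at hc
    exact hij.ne (eq_of_mk_pow_mul_mk_take hW (hij.trans hj) hj hc)

variable (p : ℕ) [Fact p.Prime]

open scoped commutatorElement in
/-- Choose `Q` such that no quotient of two vertices on the path `W` commutes with `Q.hom (.mk W)`.
If the latter equals `r ^ p`, then `W` crosses the `⟨r⟩`-orbit of its first edge only once, whereas
the crossing number of a `p`-th power is divisible by `p`. -/
theorem exists_hom_pow_ne_of_isCyclicallyReduced {W : List (X × Bool)}
    (hW : FreeGroup.IsCyclicallyReduced W) (hind : Indivisible (FreeGroup.mk W)) :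
    ∃ Q : PGroupHom p (FreeGroup X), ∀ r, r ^ p ≠ Q.hom (.mk W) := by
  have hne : 0 < W.length :=
    List.length_pos_iff.2 fun h => hind.ne_one (h ▸ FreeGroup.one_eq_mk.symm)
  obtain ⟨Q, hQ⟩ := exists_hom_forall_ne_one p
    (ι := {ij : Fin W.length × Fin W.length // ij.1 < ij.2})
    (g := fun ij => ⁅(.mk (W.take ij.1.2) * (.mk (W.take ij.1.1))⁻¹ : FreeGroup X), .mk W⁆)
    fun ij hcomm => mk_take_mul_inv_notMem_zpowers hW ij.2 ij.1.2.2
      (hind.mem_zpowers_of_commute (commutatorElement_eq_one_iff_commute.1 hcomm))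
  refine ⟨Q.edge W[0].1, fun (r : Wreath p Q.carrier) (hr : r ^ p = edgeHom p Q.hom _ _) => ?_⟩
  have hright : r.right ^ p = Q.hom (.mk W) := by
    rw [← edgeHom_right p, ← hr]
    exact (map_pow RegularWreathProduct.rightHom r p).symm
  refine cosetSum_edgeHom_ne_zero p Q.hom (Subgroup.zpowers r.right) hne hW.isReduced ?_ ?_
  · rintro i j hij hj ⟨k, hk : r.right ^ k = _⟩
    refine hQ ⟨(⟨i, hij.trans hj⟩, ⟨j, hj⟩), hij⟩ ?_
    rw [map_commutatorElement, commutatorElement_eq_one_iff_commute, ← hright, map_mul, map_inv,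
      ← hk]
    exact ((Commute.refl r.right).zpow_left k).pow_right p
  · rw [← hr, cosetSum_pow _ _ (Subgroup.mem_zpowers _)]
    simp

theorem exists_isCyclicallyReduced_conj_eq (t : FreeGroup X) :
    ∃ (c : FreeGroup X) (W : List (X × Bool)),
      FreeGroup.IsCyclicallyReduced W ∧ c * .mk W * c⁻¹ = t := by
  classical
  refine ⟨.mk (FreeGroup.reduceCyclically.conjugator t.toWord),
    FreeGroup.reduceCyclically t.toWord,
    FreeGroup.reduceCyclically.isCyclicallyReduced FreeGroup.isReduced_toWord, ?_⟩
  rw [FreeGroup.inv_mk, FreeGroup.mul_mk, FreeGroup.mul_mk,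
    FreeGroup.reduceCyclically.conj_conjugator_reduceCyclically, FreeGroup.mk_toWord]

theorem _root_.Indivisible.exists_hom_pow_ne {t : FreeGroup X} (ht : Indivisible t) :
    ∃ Q : PGroupHom p (FreeGroup X), ∀ r, r ^ p ≠ Q.hom t := by
  obtain ⟨c, W, hW, rfl⟩ := exists_isCyclicallyReduced_conj_eq t
  obtain ⟨Q, hQ⟩ := exists_hom_pow_ne_of_isCyclicallyReduced p hW ht.of_conj
  refine ⟨Q, fun r hr => hQ ((Q.hom c)⁻¹ * r * ((Q.hom c)⁻¹)⁻¹) ?_⟩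
  rw [conj_pow, hr, map_mul, map_mul, map_inv]
  group

end Indivisible

/-! ### Characters of order `p` and counting homomorphisms -/

theorem card_quotient_of_isCoatom {p : ℕ} [Fact p.Prime] {D : Type*} [Group D] [Finite D]
    (hD : IsPGroup p D) {M : Subgroup D} [M.Normal] (hM : IsCoatom M) : Nat.card (D ⧸ M) = p := by
  have := (hD.to_quotient M).isNilpotent
  have := Set.isSimpleOrder_Ici_iff_isCoatom.2 hM
  have hsimple : IsSimpleOrder (Subgroup (D ⧸ M)) :=
    (show _ ≃o Set.Ici M from QuotientGroup.comapMk'OrderIso M).isSimpleOrder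
  have : IsSimpleGroup (D ⧸ M) :=
    { (Subgroup.nontrivial_iff.1 hsimple.toNontrivial) with
      eq_bot_or_eq_top_of_normal := fun N _ => hsimple.eq_bot_or_eq_top N }
  have hprime : (Nat.card (D ⧸ M)).Prime := IsSimpleGroup.prime_card
  obtain ⟨k, hk⟩ := IsPGroup.iff_card.1 (hD.to_quotient M)
  rw [hk] at hprime ⊢
  rw [hprime.eq_one_of_pow, pow_one]

theorem exists_character_of_ne_top {p : ℕ} [Fact p.Prime] {D : Type*} [Group D] [Finite D]
    (hD : IsPGroup p D) {K : Subgroup D} (hK : K ≠ ⊤) :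
    ∃ χ : D →* Multiplicative (ZMod p), K ≤ χ.ker ∧ χ ≠ 1 := by
  obtain ⟨M, hM, hKM⟩ := (eq_top_or_exists_le_coatom K).resolve_left hK
  have := hD.isNilpotent
  have : M.Normal := Subgroup.NormalizerCondition.normal_of_coatom M
    Group.normalizerCondition_of_isNilpotent hM
  let e : D ⧸ M ≃* Multiplicative (ZMod p) :=
    mulEquivOfPrimeCardEq (card_quotient_of_isCoatom hD hM) (by simp)
  have hker : (e.toMonoidHom.comp (QuotientGroup.mk' M)).ker = M := by
    ext x
    simp
  refine ⟨e.toMonoidHom.comp (QuotientGroup.mk' M), hker.symm ▸ hKM, fun h => hM.1 ?_⟩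
  rw [← hker, h, MonoidHom.ker_one]

/-- `S` generates `F` as far as homomorphisms to `ℤ/p`, and hence to all finite `p`-groups, can
see: it is dense in the pro-`p` topology of `F`. -/
def PDense (p : ℕ) {F : Type*} [Group F] (S : Set F) : Prop :=
  ∀ χ : F →* Multiplicative (ZMod p), (∀ s ∈ S, χ s = 1) → χ = 1

theorem PDense.of_closure_eq_top (p : ℕ) {F : Type*} [Group F] {S : Set F}
    (hS : Subgroup.closure S = ⊤) : PDense p S :=
  fun _ hχ => MonoidHom.eq_of_eqOn_dense hS hχ

theorem PDense.hom_ext {p : ℕ} [Fact p.Prime] {F : Type*} [Group F] {S : Set F} (hS : PDense p S)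
    {P : Type*} [Group P] [Finite P] (hP : IsPGroup p P) {f g : F →* P}
    (hfg : ∀ s ∈ S, f s = g s) : f = g := by
  have hPP : IsPGroup p (P × P) := by
    obtain ⟨a, ha⟩ := IsPGroup.iff_card.1 hP
    exact IsPGroup.of_card (n := a + a) (by rw [Nat.card_prod, ha, pow_add])
  let φ : F →* P × P := f.prod g
  let E : Subgroup φ.range := MonoidHom.eqLocus ((MonoidHom.fst P P).comp φ.range.subtype)
    ((MonoidHom.snd P P).comp φ.range.subtype)
  suffices hE : E = ⊤ by
    ext x
    exact hE.symm.le (Subgroup.mem_top (φ.rangeRestrict x))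
  by_contra hE
  obtain ⟨χ, hχE, hχ⟩ := exists_character_of_ne_top (hPP.to_subgroup φ.range) hE
  have hχφ : χ.comp φ.rangeRestrict = 1 := hS _ fun s hs =>
    hχE (show φ.rangeRestrict s ∈ E from hfg s hs)
  exact hχ ((MonoidHom.cancel_right φ.rangeRestrict_surjective).1 hχφ)

instance finite_freeGroup_hom {X P : Type*} [Finite X] [Group P] [Finite P] :
    Finite (FreeGroup X →* P) :=
  Finite.of_equiv (X → P) FreeGroup.lift

theorem card_freeGroup_hom (X P : Type*) [Finite X] [Group P] :
    Nat.card (FreeGroup X →* P) = Nat.card P ^ Nat.card X := by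
  rw [← Nat.card_congr (FreeGroup.lift (α := X) (β := P)), Nat.card_fun]

theorem PDense.exists_hom_apply_eq {p : ℕ} [Fact p.Prime] {Z ι : Type*} [Finite Z] [Finite ι]
    {z : ι → FreeGroup Z} (hz : PDense p (Set.range z)) (hcard : Nat.card ι = Nat.card Z)
    {P : Type*} [Group P] [Finite P] (hP : IsPGroup p P) (v : ι → P) :
    ∃ f : FreeGroup Z →* P, ∀ i, f (z i) = v i := by
  have hinj : Function.Injective fun (f : FreeGroup Z →* P) (i : ι) => f (z i) :=
    fun f g hfg => hz.hom_ext hP (Set.forall_mem_range.2 (congrFun hfg))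
  obtain ⟨f, hf⟩ := (hinj.bijective_of_nat_card_le
    (by rw [card_freeGroup_hom, Nat.card_fun, hcard])).2 v
  exact ⟨f, congrFun hf⟩

theorem exists_hom_apply_eq_of_pDense_image_compl {p : ℕ} [Fact p.Prime] {Z ι : Type*} [Finite Z]
    [Finite ι] {z : ι → FreeGroup Z} (hcard : Nat.card ι = Nat.card Z + 1) {i : ι}
    (hi : PDense p (z '' {i}ᶜ)) {P : Type*} [Group P] [Finite P] (hP : IsPGroup p P) (v : ι → P) :
    ∃ f : FreeGroup Z →* P, ∀ j ≠ i, f (z j) = v j := by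
  have hrange : Set.range (fun j : ({i}ᶜ : Set ι) => z j) = z '' {i}ᶜ := by
    rw [Set.image_eq_range]
  have hcard' : Nat.card ({i}ᶜ : Set ι) = Nat.card Z := by
    have := Set.ncard_add_ncard_compl {i}
    rw [Set.ncard_singleton, hcard] at this
    rw [Nat.card_coe_set_eq]
    lia
  obtain ⟨f, hf⟩ := PDense.exists_hom_apply_eq (hrange ▸ hi) hcard' hP fun j => v j
  exact ⟨f, fun j hj => hf ⟨j, hj⟩⟩

theorem exists_dual_characters {p : ℕ} {F ι : Type*} [Group F] {z : ι → F}
    (hz : PDense p (Set.range z)) (hmin : ∀ i, ¬ PDense p (z '' {i}ᶜ)) :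
    ∃ χ : ι → F →* Multiplicative (ZMod p),
      (∀ i j, j ≠ i → χ i (z j) = 1) ∧ ∀ i, χ i (z i) ≠ 1 := by
  simp only [PDense, Set.forall_mem_image, Set.mem_compl_singleton_iff, not_forall] at hmin
  choose χ hχ hχ_ne using hmin
  refine ⟨χ, fun i j => hχ i (x := j),
    fun i hi => hχ_ne i (hz _ (Set.forall_mem_range.2 fun j => ?_))⟩
  obtain rfl | hj := eq_or_ne j i
  exacts [hi, hχ i hj]

theorem PDense.exists_image_compl {p : ℕ} [Fact p.Prime] {Z ι : Type*} [Finite Z] [Finite ι]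
    {z : ι → FreeGroup Z} (hz : PDense p (Set.range z)) (hcard : Nat.card Z < Nat.card ι) :
    ∃ i, PDense p (z '' {i}ᶜ) := by
  by_contra! hmin
  obtain ⟨χ, hχ, hχ_ne⟩ := exists_dual_characters hz hmin
  have hsurj : Function.Surjective
      fun (f : FreeGroup Z →* Multiplicative (ZMod p)) (i : ι) => f (z i) := by
    intro v
    choose c hc using fun i => mem_zpowers_of_prime_card (p := p) (by simp) (hχ_ne i) (g' := v i)
    have := Fintype.ofFinite ι
    refine ⟨∏ i, χ i ^ c i, funext fun i => ?_⟩
    simp only [MonoidHom.finsetProd_apply, MonoidHom.zpow_apply]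
    rw [Finset.prod_eq_single i (fun b _ hb => by rw [hχ b i hb.symm, one_zpow]) (by simp)]
    exact hc i
  have hle := Nat.card_le_card_of_surjective _ hsurj
  rw [card_freeGroup_hom, Nat.card_fun, Nat.pow_le_pow_iff_right
    (by simpa using (Fact.out : p.Prime).one_lt)] at hle
  lia

/-! ### Surjections between free groups of finite rank -/

section Rank

variable {X Y : Type*} {θ : FreeGroup X →* FreeGroup Y}

theorem comp_right_injective (hθ : Function.Surjective θ) (P : Type*) [Group P] :
    Function.Injective fun f : FreeGroup Y →* P => f.comp θ :=
  fun _ _ h => (MonoidHom.cancel_right hθ).1 h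

variable [Finite X]

theorem finite_of_surjective (hθ : Function.Surjective θ) : Finite Y := by
  classical
  have : Finite (FreeGroup Y →* Multiplicative (ZMod 2)) :=
    .of_injective _ (comp_right_injective hθ _)
  have : Finite (Y → Multiplicative (ZMod 2)) := .of_equiv _ FreeGroup.lift.symm
  refine .of_injective (fun y => Pi.mulSingle y (Multiplicative.ofAdd (1 : ZMod 2))) ?_
  intro y z hyz
  by_contra hne
  simpa [Pi.mulSingle_apply, hne] using congrFun hyz y

theorem card_le_of_surjective (hθ : Function.Surjective θ) : Nat.card Y ≤ Nat.card X := by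
  have := finite_of_surjective hθ
  have hle := Nat.card_le_card_of_injective _ (comp_right_injective hθ (Multiplicative (ZMod 2)))
  rw [card_freeGroup_hom, card_freeGroup_hom] at hle
  exact (Nat.pow_le_pow_iff_right (by simp)).1 hle

/-- By equality of cardinalities every homomorphism to a finite `2`-group factors through `θ`, and
these homomorphisms separate the elements of a free group. -/
theorem injective_of_surjective_of_card_le (hθ : Function.Surjective θ)
    (hcard : Nat.card X ≤ Nat.card Y) : Function.Injective θ := by
  have := finite_of_surjective hθ
  rw [injective_iff_map_eq_one]
  intro g hg
  by_contra hg_ne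
  obtain ⟨Q, hQ⟩ := exists_hom_ne_one 2 hg_ne
  obtain ⟨f, hf⟩ := ((comp_right_injective hθ Q.carrier).bijective_of_nat_card_le
    (by rw [card_freeGroup_hom, card_freeGroup_hom]
        exact Nat.pow_le_pow_right Nat.card_pos hcard)).2 Q.hom
  exact hQ (by rw [← hf, MonoidHom.comp_apply, hg, map_one])

theorem exists_comp_eq_of_freeGroup {Z : Type*} (φ : FreeGroup X →* FreeGroup Z) :
    ∃ (a : ℕ) (κ : FreeGroup (Fin a) →* FreeGroup Z) (θ : FreeGroup X →* FreeGroup (Fin a)),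
      Function.Injective κ ∧ Function.Surjective θ ∧ κ.comp θ = φ := by
  let e := IsFreeGroup.mulEquiv φ.range
  have hsurj : Function.Surjective (e.symm.toMonoidHom.comp φ.rangeRestrict) :=
    e.symm.surjective.comp φ.rangeRestrict_surjective
  have := finite_of_surjective hsurj
  let e' := (FreeGroup.freeGroupCongr (Finite.equivFin _)).symm.trans e
  exact ⟨_, φ.range.subtype.comp e'.toMonoidHom, e'.symm.toMonoidHom.comp φ.rangeRestrict,
    φ.range.subtype_injective.comp e'.injective,
    e'.symm.surjective.comp φ.rangeRestrict_surjective, MonoidHom.ext fun w => by simp⟩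

end Rank

section Joint

theorem hom_ext_of_range_sup {A B F H : Type*} [Group A] [Group B] [Group F] [Group H]
    {α : A →* F} {β : B →* F} (hgen : α.range ⊔ β.range = ⊤) {f g : F →* H}
    (hα : f.comp α = g.comp α) (hβ : f.comp β = g.comp β) : f = g := by
  have hα' : α.range ≤ f.eqLocus g := fun _ ⟨a, ha⟩ => ha ▸ DFunLike.congr_fun hα a
  have hβ' : β.range ≤ f.eqLocus g := fun _ ⟨b, hb⟩ => hb ▸ DFunLike.congr_fun hβ b
  exact MonoidHom.eq_of_eqOn_top (hgen ▸ sup_le hα' hβ')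

variable {X Y : Type*} {G : Type*} [Group G] (α : FreeGroup X →* G) (β : FreeGroup Y →* G)

/-- The images in `G` of all the generators of two free groups. -/
def gens : X ⊕ Y → G :=
  Sum.elim (fun x => α (.of x)) (fun y => β (.of y))

/-- The homomorphism `F_X * F_Y → G` induced by `α` and `β`, with the free product presented as
the free group on `X ⊕ Y`. -/
def joint : FreeGroup (X ⊕ Y) →* G :=
  FreeGroup.lift (gens α β)

theorem joint_comp_map_inl : (joint α β).comp (FreeGroup.map Sum.inl) = α := by
  ext x
  simp [joint, gens]

theorem joint_comp_map_inr : (joint α β).comp (FreeGroup.map Sum.inr) = β := by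
  ext y
  simp [joint, gens]

theorem range_joint : (joint α β).range = α.range ⊔ β.range := by
  apply le_antisymm
  · rw [joint, FreeGroup.range_lift_eq_closure, Subgroup.closure_le]
    rintro _ ⟨x | y, rfl⟩
    · exact Subgroup.mem_sup_left ⟨_, rfl⟩
    · exact Subgroup.mem_sup_right ⟨_, rfl⟩
  · exact sup_le (fun _ ⟨g, hg⟩ => ⟨.map Sum.inl g, hg ▸ DFunLike.congr_fun
      (joint_comp_map_inl α β) g⟩) (fun _ ⟨h, hh⟩ => ⟨.map Sum.inr h, hh ▸ DFunLike.congr_fun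
      (joint_comp_map_inr α β) h⟩)

variable {α β}

theorem joint_surjective (hgen : α.range ⊔ β.range = ⊤) : Function.Surjective (joint α β) :=
  MonoidHom.range_eq_top.1 ((range_joint α β).trans hgen)

theorem eq_one_of_joint_injective (hinj : Function.Injective (joint α β)) {g : FreeGroup X}
    {h : FreeGroup Y} (hgh : α g = β h) : g = 1 := by
  let retraction := joint (MonoidHom.id (FreeGroup X)) (1 : FreeGroup Y →* FreeGroup X)
  have hmap : FreeGroup.map Sum.inl g = FreeGroup.map (Sum.inr : Y → X ⊕ Y) h := hinj <| by
    rw [← MonoidHom.comp_apply, ← MonoidHom.comp_apply, joint_comp_map_inl, joint_comp_map_inr, hgh]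
  simpa only [retraction, ← MonoidHom.comp_apply, joint_comp_map_inl, joint_comp_map_inr] using!
    congrArg retraction hmap

theorem eq_one_of_card_le {Z : Type*} [Finite X] [Finite Y] {α : FreeGroup X →* FreeGroup Z}
    {β : FreeGroup Y →* FreeGroup Z} (hgen : α.range ⊔ β.range = ⊤)
    (hcard : Nat.card X + Nat.card Y ≤ Nat.card Z) {g : FreeGroup X} {h : FreeGroup Y}
    (hgh : α g = β h) : g = 1 :=
  eq_one_of_joint_injective
    (injective_of_surjective_of_card_le (joint_surjective hgen) (by rwa [Nat.card_sum])) hgh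

end Joint

/-! ### Extending pairs of homomorphisms over a free quotient of the amalgam -/

section HasLifts

variable {A B F : Type*} [Group A] [Group B] [Group F]

/-- Every pair of homomorphisms `A →* H`, `B →* H` agreeing on `t₁` and `t₂` extends along
`α` and `β`. If this holds for all `H`, then `F` is the amalgam of `A` and `B` along `t₁ = t₂`. -/
def HasLifts (α : A →* F) (β : B →* F) (t₁ : A) (t₂ : B) (H : Type*) [Group H] : Prop :=
  ∀ (g₁ : A →* H) (g₂ : B →* H), g₁ t₁ = g₂ t₂ → ∃ h : F →* H, h.comp α = g₁ ∧ h.comp β = g₂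

theorem HasLifts.swap {α : A →* F} {β : B →* F} {t₁ : A} {t₂ : B} {H : Type*} [Group H]
    (h : HasLifts α β t₁ t₂ H) : HasLifts β α t₂ t₁ H :=
  fun g₁ g₂ hg => (h g₂ g₁ hg.symm).imp fun _ => And.symm

end HasLifts

/-- `α` and `β` exhibit the free group on `Z` as a quotient of the amalgam of the free groups on
`X` and `Y` along `t₁ = t₂ ≠ 1`, of the rank `|X| + |Y| - 1` that an amalgam which is free has. -/
structure IsAmalgamQuotient {X Y Z : Type*} (α : FreeGroup X →* FreeGroup Z)
    (β : FreeGroup Y →* FreeGroup Z) (t₁ : FreeGroup X) (t₂ : FreeGroup Y) : Prop where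
  card_add_one : Nat.card Z + 1 = Nat.card X + Nat.card Y
  map_eq : α t₁ = β t₂
  left_ne_one : t₁ ≠ 1
  right_ne_one : t₂ ≠ 1
  range_sup_range : α.range ⊔ β.range = ⊤

section ExponentSum

variable {X : Type*}

open Classical in
/-- The exponent sum of the letter `x` in an element of a free group. -/
noncomputable def exponentSum (x : X) (g : FreeGroup X) : ℤ :=
  (FreeGroup.lift (Pi.mulSingle x (Multiplicative.ofAdd (1 : ℤ))) g).toAdd

theorem map_eq_zpow_exponentSum {G : Type*} [Group G] {x : X} {f : FreeGroup X →* G}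
    (hf : ∀ y ≠ x, f (.of y) = 1) (g : FreeGroup X) : f g = f (.of x) ^ exponentSum x g := by
  classical
  have : f = (zpowersHom G (f (.of x))).comp
      (FreeGroup.lift (Pi.mulSingle x (Multiplicative.ofAdd (1 : ℤ)))) := by
    ext y
    obtain rfl | hy := eq_or_ne y x
    · simp
    · simp [hy, hf y hy]
  conv_lhs => rw [this]
  simp only [MonoidHom.comp_apply, zpowersHom_apply, exponentSum]

theorem map_eq_prod_zpow_exponentSum [Fintype X] {A : Type*} [CommGroup A]
    (f : FreeGroup X →* A) (g : FreeGroup X) : f g = ∏ x, f (.of x) ^ exponentSum x g := by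
  classical
  have : f = ∏ x, (zpowersHom A (f (.of x))).comp
      (FreeGroup.lift (Pi.mulSingle x (Multiplicative.ofAdd (1 : ℤ)))) := by
    ext y
    rw [MonoidHom.finsetProd_apply, Finset.prod_eq_single y] <;> simp +contextual
  conv_lhs => rw [this]
  simp only [MonoidHom.finsetProd_apply, MonoidHom.comp_apply, zpowersHom_apply, exponentSum]

theorem eq_one_of_zpow_eq_one {p : ℕ} [Fact p.Prime] {a : Multiplicative (ZMod p)} {c : ℤ}
    (hc : ¬ (p : ℤ) ∣ c) (ha : a ^ c = 1) : a = 1 := by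
  have hmul : (c : ZMod p) * a.toAdd = 0 := by
    rw [← zsmul_eq_mul, ← toAdd_zpow, ha, toAdd_one]
  exact (mul_eq_zero.1 hmul).resolve_left (mt (ZMod.intCast_zmod_eq_zero_iff_dvd c p).1 hc)

theorem pDense_insert_image_of {p : ℕ} [Fact p.Prime] {x : X} {t : FreeGroup X}
    (ht : ¬ (p : ℤ) ∣ exponentSum x t) : PDense p (insert t (FreeGroup.of '' {x}ᶜ)) := by
  intro χ hχ
  have hother : ∀ y ≠ x, χ (.of y) = 1 := fun y hy => hχ _ (.inr ⟨y, hy, rfl⟩)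
  have hx : χ (.of x) = 1 := eq_one_of_zpow_eq_one ht <| by
    rw [← map_eq_zpow_exponentSum hother, hχ t (.inl rfl)]
  refine FreeGroup.ext_hom _ _ fun y => ?_
  obtain rfl | hy := eq_or_ne y x
  exacts [hx, hother y hy]

end ExponentSum

namespace IsAmalgamQuotient

variable {X Y Z : Type*} {α : FreeGroup X →* FreeGroup Z} {β : FreeGroup Y →* FreeGroup Z}
  {t₁ : FreeGroup X} {t₂ : FreeGroup Y}

theorem swap (h : IsAmalgamQuotient α β t₁ t₂) : IsAmalgamQuotient β α t₂ t₁ where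
  card_add_one := h.card_add_one.trans (add_comm _ _)
  map_eq := h.map_eq.symm
  left_ne_one := h.right_ne_one
  right_ne_one := h.left_ne_one
  range_sup_range := sup_comm _ _ |>.trans h.range_sup_range

variable [Finite X] [Finite Y]

/-- If the image of `β` had smaller rank, `α` and the inclusion of that image would make the free
group on `Z` a free product, which leaves no room for the relation `α t₁ = β t₂`. -/
theorem injective_right (h : IsAmalgamQuotient α β t₁ t₂) : Function.Injective β := by
  obtain ⟨b, κ, θ, hκ, hθ, rfl⟩ := exists_comp_eq_of_freeGroup β
  refine hκ.comp (injective_of_surjective_of_card_le hθ ?_)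
  by_contra hlt
  refine h.left_ne_one (eq_one_of_card_le (β := κ) ?_ ?_ h.map_eq)
  · rw [← h.range_sup_range, MonoidHom.range_comp, MonoidHom.range_eq_top.2 hθ,
      ← MonoidHom.range_eq_map]
  · have := h.card_add_one
    lia

theorem injective_left (h : IsAmalgamQuotient α β t₁ t₂) : Function.Injective α :=
  h.swap.injective_right

theorem card_gens (h : IsAmalgamQuotient α β t₁ t₂) : Nat.card (X ⊕ Y) = Nat.card Z + 1 := by
  rw [Nat.card_sum, h.card_add_one]

variable [Finite Z]

theorem exists_pDense_gens (h : IsAmalgamQuotient α β t₁ t₂) (p : ℕ) [Fact p.Prime] :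
    ∃ i, PDense p (gens α β '' {i}ᶜ) := by
  refine PDense.exists_image_compl (.of_closure_eq_top p ?_) (by simp [h.card_gens])
  exact FreeGroup.lift_surjective_iff_closure_range_eq_top.1 (joint_surjective h.range_sup_range)

theorem exists_hom_comp_left_eq (h : IsAmalgamQuotient α β t₁ t₂) {p : ℕ} [Fact p.Prime] {y : Y}
    (hy : PDense p (gens α β '' {.inr y}ᶜ)) {P : Type*} [Group P] [Finite P] (hP : IsPGroup p P)
    (g : FreeGroup X →* P) :
    ∃ f : FreeGroup Z →* P, f.comp α = g ∧ g t₁ = f (β (.of y)) ^ exponentSum y t₂ := by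
  obtain ⟨f, hf⟩ := exists_hom_apply_eq_of_pDense_image_compl h.card_gens hy hP
    (Sum.elim (fun x => g (.of x)) 1)
  have hfα : f.comp α = g := FreeGroup.ext_hom _ _ fun x => hf (.inl x) (by simp)
  refine ⟨f, hfα, ?_⟩
  rw [← hfα, MonoidHom.comp_apply, h.map_eq]
  exact map_eq_zpow_exponentSum (f := f.comp β) (fun j hj => hf (.inr j) (by simpa using hj)) t₂

theorem exponentSum_ne_zero (h : IsAmalgamQuotient α β t₁ t₂) {p : ℕ} [Fact p.Prime] {y : Y}
    (hy : PDense p (gens α β '' {.inr y}ᶜ)) : exponentSum y t₂ ≠ 0 := by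
  intro hzero
  obtain ⟨Q, hQ⟩ := exists_hom_ne_one p h.left_ne_one
  obtain ⟨f, -, hf⟩ := h.exists_hom_comp_left_eq hy Q.isPGroup Q.hom
  exact hQ (by rw [hf, hzero, zpow_zero])

theorem exists_exponentSum_ne_zero (h : IsAmalgamQuotient α β t₁ t₂) :
    (∃ x, exponentSum x t₁ ≠ 0) ∨ ∃ y, exponentSum y t₂ ≠ 0 := by
  obtain ⟨x | y, hi⟩ := h.exists_pDense_gens 2
  · refine .inl ⟨x, h.swap.exponentSum_ne_zero (p := 2) ?_⟩
    convert hi using 1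
    ext g
    simp [gens, or_comm]
  · exact .inr ⟨y, h.exponentSum_ne_zero hi⟩

theorem hasLifts_of_not_dvd (h : IsAmalgamQuotient α β t₁ t₂) {p : ℕ} [Fact p.Prime] {x : X}
    (hx : ¬ (p : ℤ) ∣ exponentSum x t₁) {P : Type*} [Group P] [Finite P] (hP : IsPGroup p P) :
    HasLifts α β t₁ t₂ P := by
  have hdense : PDense p (gens α β '' {.inl x}ᶜ) := by
    intro χ hχ
    have hχβ : χ.comp β = 1 := FreeGroup.ext_hom _ _ fun y => hχ _ ⟨.inr y, by simp, rfl⟩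
    refine hom_ext_of_range_sup h.range_sup_range (pDense_insert_image_of hx _ ?_) hχβ
    rintro _ (rfl | ⟨j, hj, rfl⟩)
    · rw [MonoidHom.comp_apply, h.map_eq]
      exact DFunLike.congr_fun hχβ t₂
    · exact hχ _ ⟨.inl j, by simpa using hj, rfl⟩
  intro g₁ g₂ hg
  obtain ⟨f, hf⟩ := exists_hom_apply_eq_of_pDense_image_compl h.card_gens hdense hP
    (Sum.elim (fun x => g₁ (.of x)) (fun y => g₂ (.of y)))
  have hfβ : f.comp β = g₂ := FreeGroup.ext_hom _ _ fun y => hf (.inr y) (by simp)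
  refine ⟨f, (pDense_insert_image_of hx).hom_ext hP ?_, hfβ⟩
  rintro _ (rfl | ⟨j, hj, rfl⟩)
  · rw [MonoidHom.comp_apply, h.map_eq, hg, ← hfβ, MonoidHom.comp_apply]
  · exact hf (.inl j) (by simpa using hj)

theorem exists_hasLifts_isPGroup (h : IsAmalgamQuotient α β t₁ t₂) :
    ∃ p : ℕ, p.Prime ∧
      ∀ (P : Type) [Group P] [Finite P], IsPGroup p P → HasLifts α β t₁ t₂ P := by
  have exists_not_dvd (c : ℤ) (hc : c ≠ 0) : ∃ p : ℕ, p.Prime ∧ ¬ (p : ℤ) ∣ c := by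
    obtain ⟨p, hcp, hp⟩ := Nat.exists_infinite_primes (c.natAbs + 1)
    refine ⟨p, hp, fun hdvd => ?_⟩
    have := Nat.le_of_dvd (Int.natAbs_pos.2 hc) (Int.natCast_dvd.1 hdvd)
    lia
  obtain ⟨x, hx⟩ | ⟨y, hy⟩ := h.exists_exponentSum_ne_zero
  · obtain ⟨p, hp, hpx⟩ := exists_not_dvd _ hx
    have := Fact.mk hp
    exact ⟨p, hp, fun P _ _ hP => h.hasLifts_of_not_dvd hpx hP⟩
  · obtain ⟨p, hp, hpy⟩ := exists_not_dvd _ hy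
    have := Fact.mk hp
    exact ⟨p, hp, fun P _ _ hP => (h.swap.hasLifts_of_not_dvd hpy hP).swap⟩

end IsAmalgamQuotient

/-! ### Reduced words survive -/

section Marking

variable {p : ℕ} {P : Type*} [Group P]

open Classical in
/-- The indicator function of the subgroup `⟨τ⟩`, with values in `ℤ/p`. -/
noncomputable def mark (p : ℕ) (τ x : P) : ZMod p :=
  if x ∈ Subgroup.zpowers τ then 1 else 0

theorem mark_of_mem {τ x : P} (hx : x ∈ Subgroup.zpowers τ) : mark p τ x = 1 :=
  if_pos hx

theorem mark_of_notMem {τ x : P} (hx : x ∉ Subgroup.zpowers τ) : mark p τ x = 0 :=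
  if_neg hx

theorem mark_inv_mul_self (τ x : P) : mark p τ (τ⁻¹ * x) = mark p τ x := by
  simp only [mark, Subgroup.mul_mem_cancel_left _ (inv_mem (Subgroup.mem_zpowers τ))]

/-- The embedding of `P` into the wreath product conjugated by `mark p τ`. It agrees with the
standard embedding on `τ`, whose left translation fixes `mark p τ`. -/
noncomputable def markHom (p : ℕ) (τ : P) : P →* Wreath p P :=
  (MulAut.conj ⟨fun x => .ofAdd (mark p τ x), 1⟩).toMonoidHom.comp RegularWreathProduct.inl

theorem markHom_right (τ g : P) : (markHom p τ g).right = g := by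
  simp [markHom]

theorem toAdd_markHom_left (τ g x : P) :
    ((markHom p τ g).left x).toAdd = mark p τ x - mark p τ (g⁻¹ * x) := by
  simp [markHom, sub_eq_add_neg]

theorem markHom_self (τ : P) : markHom p τ τ = RegularWreathProduct.inl τ := by
  ext x
  · apply Multiplicative.toAdd.injective
    rw [toAdd_markHom_left, mark_inv_mul_self, sub_self]
    simp
  · rw [markHom_right]
    simp

end Marking

section Words

variable {A B F : Type*} [Group A] [Group B] [Group F] {p : ℕ} [Fact p.Prime]
  {α : A →* F} {β : B →* F} {t₁ : A} {t₂ : B}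

theorem exists_markHom_lift
    (hlift : ∀ (P : Type) [Group P] [Finite P], IsPGroup p P → HasLifts α β t₁ t₂ P)
    (ht : α t₁ = β t₂) (hgen : α.range ⊔ β.range = ⊤) (Q : PGroupHom p F) :
    ∃ f : F →* Wreath p Q.carrier, (∀ v, (f v).right = Q.hom v) ∧
      (∀ a, f (α a) = markHom p (Q.hom (α t₁)) (Q.hom (α a))) ∧
      ∀ b, f (β b) = RegularWreathProduct.inl (Q.hom (β b)) := by
  obtain ⟨f, hα, hβ⟩ := hlift _ (isPGroup_wreath Q.isPGroup)
    ((markHom p (Q.hom (α t₁))).comp (Q.hom.comp α))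
    (RegularWreathProduct.inl.comp (Q.hom.comp β))
    (by simp only [MonoidHom.comp_apply, markHom_self, ht])
  replace hα := DFunLike.congr_fun hα
  replace hβ := DFunLike.congr_fun hβ
  simp only [MonoidHom.comp_apply] at hα hβ
  have hright : RegularWreathProduct.rightHom.comp f = Q.hom := by
    refine hom_ext_of_range_sup hgen (MonoidHom.ext fun a => ?_) (MonoidHom.ext fun b => ?_)
    · simp [hα, markHom_right]
    · simp [hβ]
  exact ⟨f, DFunLike.congr_fun hright, hα, hβ⟩

theorem exists_marking
    (hlift : ∀ (P : Type) [Group P] [Finite P], IsPGroup p P → HasLifts α β t₁ t₂ P)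
    (ht : α t₁ = β t₂) (hgen : α.range ⊔ β.range = ⊤) (Q : PGroupHom p F) (x : Q.carrier) :
    ∃ Q' : PGroupHom p F, Q'.hom.ker ≤ Q.hom.ker ∧ ∃ S : F → ZMod p,
      (∀ v a, S (v * α a) = S v + mark p (Q.hom (α t₁)) ((Q.hom v)⁻¹ * x) -
        mark p (Q.hom (α t₁)) ((Q.hom (v * α a))⁻¹ * x)) ∧
      (∀ v b, S (v * β b) = S v) ∧
      ∀ v w, Q'.hom (v⁻¹ * w) ∈ Subgroup.zpowers (Q'.hom (α t₁)) → S w = S v := by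
  obtain ⟨f, hright, hα, hβ⟩ := exists_markHom_lift hlift ht hgen Q
  have hmul : ∀ v w, ((f (v * w)).left x).toAdd =
      ((f v).left x).toAdd + ((f w).left ((Q.hom v)⁻¹ * x)).toAdd := fun v w => by
    rw [map_mul, RegularWreathProduct.mul_left, Pi.mul_apply, toAdd_mul, hright]
  have hmulβ : ∀ v b, ((f (v * β b)).left x).toAdd = ((f v).left x).toAdd := fun v b => by
    rw [hmul, hβ]
    simp
  refine ⟨⟨Wreath p Q.carrier, isPGroup_wreath Q.isPGroup, f⟩, fun v hv => ?_,
    fun v => ((f v).left x).toAdd, fun v a => ?_, hmulβ, ?_⟩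
  · rw [MonoidHom.mem_ker] at hv ⊢
    rw [← hright, hv, RegularWreathProduct.one_right]
  · beta_reduce
    rw [hmul, hα, toAdd_markHom_left, map_mul, mul_inv_rev, mul_assoc, add_sub_assoc]
  · rintro v w ⟨k, hk : f (α t₁) ^ k = f (v⁻¹ * w)⟩
    have hw : f w = f (v * β (t₂ ^ k)) := by
      rw [map_mul f v, map_zpow, ← ht, map_zpow, hk, ← map_mul, mul_inv_cancel_left]
    simp only [hw, hmulβ]

/-- `⟨t⟩` is closed in the topology induced on `A` from the pro-`p` topology of `F`. -/
def IsPSeparable (p : ℕ) (α : A →* F) (t : A) : Prop :=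
  ∀ a ∉ Subgroup.zpowers t, ∃ Q : PGroupHom p F,
    Q.hom (α a) ∉ Subgroup.zpowers (Q.hom (α t))

/-- A letter from one of the two factors that does not lie in the amalgamated subgroup. -/
def IsProper (t₁ : A) (t₂ : B) : A ⊕ B → Prop :=
  Sum.elim (· ∉ Subgroup.zpowers t₁) (· ∉ Subgroup.zpowers t₂)

theorem ne_of_single_mark {R : Type*} [Ring R] [Nontrivial R] {S e : ℕ → R} {left : ℕ → Bool}
    {j k : ℕ} (hjk : j + 2 ≤ k)
    (hS : ∀ i, j ≤ i → i < k → S (i + 1) = if left i then S i + e i - e (i + 1) else S i)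
    (he : ∀ i, j ≤ i → i ≤ k → e i = if i = j + 1 then 1 else 0)
    (hleft : left j ≠ left (j + 1)) : S k ≠ S j := by
  have hafter : ∀ i, j + 2 ≤ i → i ≤ k → S i = S (j + 2) := by
    intro i hi
    induction i, hi using Nat.le_induction with
    | base => exact fun _ => rfl
    | succ i hi ih =>
      intro hik
      rw [hS i (by omega) (by omega), he i (by omega) (by omega), he (i + 1) (by omega) hik,
        if_neg (by omega : i ≠ j + 1), if_neg (by omega : i + 1 ≠ j + 1), ih (by omega)]
      simp
  have h₁ := hS j le_rfl (by omega)
  have h₂ := hS (j + 1) (by omega) (by omega)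
  rw [he (j + 1) (by omega) (by omega), if_pos rfl] at h₁ h₂
  rw [he j le_rfl (by omega), if_neg (by omega : j ≠ j + 1)] at h₁
  rw [he (j + 1 + 1) (by omega) (by omega), if_neg (by omega : j + 1 + 1 ≠ j + 1)] at h₂
  rw [hafter k hjk le_rfl, h₂, h₁]
  cases hj : left j <;> cases hj' : left (j + 1) <;> simp_all

/-- Mark the coset of `u (j + 1)`. The path `u j, …, u k` visits it exactly once, between two
letters of which just one comes from `A`, so the sum `S`, which sees only the letters from `A`,
changes by `±1` along the path. -/
theorem exists_notMem_zpowers_of_alternating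
    (hlift : ∀ (P : Type) [Group P] [Finite P], IsPGroup p P → HasLifts α β t₁ t₂ P)
    (ht : α t₁ = β t₂) (hgen : α.range ⊔ β.range = ⊤) {u : ℕ → F} {c : ℕ → A ⊕ B} {j k : ℕ}
    (hu : ∀ i < k, u (i + 1) = u i * Sum.elim α β (c i))
    (halt : (c j).isLeft ≠ (c (j + 1)).isLeft) (hjk : j + 2 ≤ k) {Q : PGroupHom p F}
    (hsep : Q.Separates (α t₁) u k)
    (hmem : Q.hom ((u j)⁻¹ * u k) ∈ Subgroup.zpowers (Q.hom (α t₁))) :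
    ∃ Q' : PGroupHom p F, Q'.hom.ker ≤ Q.hom.ker ∧
      Q'.hom ((u j)⁻¹ * u k) ∉ Subgroup.zpowers (Q'.hom (α t₁)) := by
  obtain ⟨Q', hker, S, hSα, hSβ, hS⟩ := exists_marking hlift ht hgen Q (Q.hom (u (j + 1)))
  refine ⟨Q', hker, fun hmem' => ?_⟩
  refine ne_of_single_mark (S := fun i => S (u i)) (left := fun i => (c i).isLeft) hjk
    (e := fun i => mark p (Q.hom (α t₁)) ((Q.hom (u i))⁻¹ * Q.hom (u (j + 1))))
    (fun i _ hik => ?_) (fun i hji hik => ?_) halt (hS _ _ hmem')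
  · rw [hu i hik]
    cases c i <;> simp [hSα, hSβ]
  simp only [← map_inv, ← map_mul]
  split_ifs with hi
  · rw [hi, inv_mul_cancel, map_one]
    exact mark_of_mem (one_mem _)
  have hj : Q.hom ((u j)⁻¹ * u (j + 1)) ∉ Subgroup.zpowers (Q.hom (α t₁)) :=
    hsep (Nat.lt_succ_self j) (by omega)
  refine mark_of_notMem fun hmem_i => ?_
  obtain rfl | hji := hji.eq_or_lt
  · exact hj hmem_i
  obtain rfl | hik := hik.eq_or_lt
  · exact hj (by simpa [mul_assoc] using mul_mem hmem hmem_i)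
  · exact hsep (by omega : j + 1 < i) hik (by simpa using inv_mem hmem_i)

theorem exists_separates_of_alternating
    (hlift : ∀ (P : Type) [Group P] [Finite P], IsPGroup p P → HasLifts α β t₁ t₂ P)
    (ht : α t₁ = β t₂) (hgen : α.range ⊔ β.range = ⊤) (hα : IsPSeparable p α t₁)
    (hβ : IsPSeparable p β t₂) {u : ℕ → F} {c : ℕ → A ⊕ B} {n : ℕ}
    (hu : ∀ i < n, u (i + 1) = u i * Sum.elim α β (c i))
    (hproper : ∀ i < n, IsProper t₁ t₂ (c i))
    (halt : ∀ i, i + 1 < n → (c i).isLeft ≠ (c (i + 1)).isLeft) :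
    ∃ Q : PGroupHom p F, Q.Separates (α t₁) u (n + 1) := by
  obtain ⟨Q₀, hQ₀⟩ := PGroupHom.exists_forall_notMem_zpowers (p := p) (t := α t₁)
    (g := fun i : Fin n => Sum.elim α β (c i)) fun i => by
      have hi := hproper i i.2
      cases hc : c i <;> rw [hc] at hi
      exacts [hα _ hi, ht ▸ hβ _ hi]
  obtain ⟨Q, -, hQ⟩ := PGroupHom.exists_separates (u := u) (n := n + 1) Q₀
    fun Q hQQ₀ j k hjk hkn hsep hmem => by
      refine exists_notMem_zpowers_of_alternating hlift ht hgen (fun i hi => hu i (by omega))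
        (halt j ?_) ?_ hsep hmem <;> by_contra! hlt <;> obtain rfl : k = j + 1 := by omega
      all_goals
        rw [hu j (by omega), inv_mul_cancel_left] at hmem
        exact PGroupHom.notMem_zpowers_mono hQQ₀ (hQ₀ ⟨j, by omega⟩) hmem
  exact ⟨Q, hQ⟩

theorem prod_ne_one_of_alternating
    (hlift : ∀ (P : Type) [Group P] [Finite P], IsPGroup p P → HasLifts α β t₁ t₂ P)
    (ht : α t₁ = β t₂) (hgen : α.range ⊔ β.range = ⊤) (hα : IsPSeparable p α t₁)
    (hβ : IsPSeparable p β t₂) {L : List (A ⊕ B)} (hL : L ≠ [])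
    (hproper : ∀ x ∈ L, IsProper t₁ t₂ x) (halt : L.IsChain fun x y => x.isLeft ≠ y.isLeft) :
    (L.map (Sum.elim α β)).prod ≠ 1 := by
  obtain ⟨Q, hQ⟩ := exists_separates_of_alternating hlift ht hgen hα hβ (n := L.length)
    (u := fun i => ((L.take i).map (Sum.elim α β)).prod) (c := fun i => L.getD i (.inl 1))
    (fun i hi => by
      rw [List.getD_eq_getElem _ _ hi, List.take_succ_eq_append_getElem hi, List.map_append,
        List.prod_append, List.map_singleton, List.prod_singleton])
    (fun i hi => by rw [List.getD_eq_getElem _ _ hi]; exact hproper _ (List.getElem_mem hi))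
    fun i hi => by
      simpa [hi, Nat.lt_of_succ_lt hi] using List.isChain_iff_getElem.1 halt i hi
  intro hprod
  refine hQ (List.length_pos_iff.2 hL) (Nat.lt_succ_self _) ?_
  simp [hprod]

/-! ### Recognizing an amalgam -/

/-- Adjacent letters of a reduced word. -/
def IsReducedPair (t₁ : A) (t₂ : B) (x y : A ⊕ B) : Prop :=
  x.isLeft ≠ y.isLeft ∧ IsProper t₁ t₂ x ∧ IsProper t₁ t₂ y

theorem exists_letter_eq_mul {x y : A ⊕ B} (hxy : ¬ IsReducedPair t₁ t₂ x y) {γ : A →* F}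
    {δ : B →* F} (ht : γ t₁ = δ t₂) :
    ∃ z, Sum.elim γ δ z = Sum.elim γ δ x * Sum.elim γ δ y := by
  have hbad : x.isLeft ≠ y.isLeft → ¬ IsProper t₁ t₂ x ∨ ¬ IsProper t₁ t₂ y := fun h => by
    by_contra! hp
    exact hxy ⟨h, hp⟩
  rcases x with a | b <;> rcases y with a' | b'
  · exact ⟨.inl (a * a'), by simp⟩
  · obtain h | h := hbad (by simp) <;> obtain ⟨k, rfl⟩ := not_not.1 h
    exacts [⟨.inr (t₂ ^ k * b'), by simp [ht]⟩, ⟨.inl (a * t₁ ^ k), by simp [ht]⟩]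
  · obtain h | h := hbad (by simp) <;> obtain ⟨k, rfl⟩ := not_not.1 h
    exacts [⟨.inl (t₁ ^ k * a'), by simp [ht]⟩, ⟨.inr (b * t₂ ^ k), by simp [ht]⟩]
  · exact ⟨.inr (b * b'), by simp⟩

theorem exists_reduced_cons {γ : A →* F} {δ : B →* F} (ht : γ t₁ = δ t₂) (x : A ⊕ B)
    {L : List (A ⊕ B)} (hL : L.IsChain (IsReducedPair t₁ t₂)) :
    ∃ L' : List (A ⊕ B), L'.IsChain (IsReducedPair t₁ t₂) ∧
      (L'.map (Sum.elim γ δ)).prod = Sum.elim γ δ x * (L.map (Sum.elim γ δ)).prod := by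
  induction L generalizing x with
  | nil => exact ⟨[x], .singleton x, by simp⟩
  | cons y L ih =>
    by_cases hxy : IsReducedPair t₁ t₂ x y
    · exact ⟨x :: y :: L, hL.cons_cons hxy, by simp⟩
    obtain ⟨z, hz⟩ := exists_letter_eq_mul hxy ht
    obtain ⟨L', hL', hprod⟩ := ih z hL.tail
    exact ⟨L', hL', by rw [hprod, hz, List.map_cons, List.prod_cons, mul_assoc]⟩

theorem exists_reduced_of_mem_sup {γ : A →* F} {δ : B →* F} (ht : γ t₁ = δ t₂) {g : F}
    (hg : g ∈ γ.range ⊔ δ.range) :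
    ∃ L : List (A ⊕ B), L.IsChain (IsReducedPair t₁ t₂) ∧ (L.map (Sum.elim γ δ)).prod = g := by
  rw [Subgroup.sup_eq_closure] at hg
  have hletter : ∀ x ∈ (γ.range : Set F) ∪ δ.range, ∃ c, Sum.elim γ δ c = x := by
    rintro _ (⟨a, rfl⟩ | ⟨b, rfl⟩)
    exacts [⟨.inl a, rfl⟩, ⟨.inr b, rfl⟩]
  induction hg using Subgroup.closure_induction_left with
  | one => exact ⟨[], .nil, rfl⟩
  | mul_left x hx y _ ih =>
    obtain ⟨L, hL, rfl⟩ := ih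
    obtain ⟨c, rfl⟩ := hletter x hx
    exact exists_reduced_cons ht c hL
  | inv_mul_cancel x hx y _ ih =>
    obtain ⟨L, hL, rfl⟩ := ih
    obtain ⟨c, hc⟩ := hletter x⁻¹ (hx.imp inv_mem inv_mem)
    exact hc ▸ exists_reduced_cons ht c hL

theorem isProper_of_isChain {L : List (A ⊕ B)} (hL : L.IsChain (IsReducedPair t₁ t₂))
    (hlen : 2 ≤ L.length) : ∀ x ∈ L, IsProper t₁ t₂ x := by
  intro x hx
  obtain ⟨i, hi, rfl⟩ := List.getElem_of_mem hx
  rw [List.isChain_iff_getElem] at hL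
  obtain _ | i := i
  exacts [(hL 0 hlen).2.1, (hL i hi).2.2]

theorem eq_one_of_mem_sup_of_fst_eq_one
    (hlift : ∀ (P : Type) [Group P] [Finite P], IsPGroup p P → HasLifts α β t₁ t₂ P)
    (ht : α t₁ = β t₂) (hgen : α.range ⊔ β.range = ⊤) (hα : IsPSeparable p α t₁)
    (hβ : IsPSeparable p β t₂) (hα_inj : Function.Injective α) (hβ_inj : Function.Injective β)
    {H : Type*} [Group H] {g₁ : A →* H} {g₂ : B →* H} (hg : g₁ t₁ = g₂ t₂) {k : F × H}
    (hk : k ∈ (α.prod g₁).range ⊔ (β.prod g₂).range) (hfst : k.1 = 1) : k = 1 := by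
  obtain ⟨L, hL, rfl⟩ := exists_reduced_of_mem_sup (Prod.ext ht hg) hk
  replace hfst : (L.map (Sum.elim α β)).prod = 1 := by
    rw [← hfst, ← MonoidHom.coe_fst, map_list_prod, List.map_map]
    congr 2
    ext (a | b) <;> rfl
  match L with
  | [] => rfl
  | [.inl a] => simp [(map_eq_one_iff α hα_inj).1 (by simpa using hfst)]
  | [.inr b] => simp [(map_eq_one_iff β hβ_inj).1 (by simpa using hfst)]
  | x :: y :: L =>
    exact absurd hfst (prod_ne_one_of_alternating hlift ht hgen hα hβ (by simp)
      (isProper_of_isChain hL (by simp)) (hL.imp fun _ _ h => h.1))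

/-- The subgroup of `F × H` generated by the images of `A` and `B` is the graph of the extension. -/
theorem hasLifts_of_forall_isPGroup
    (hlift : ∀ (P : Type) [Group P] [Finite P], IsPGroup p P → HasLifts α β t₁ t₂ P)
    (ht : α t₁ = β t₂) (hgen : α.range ⊔ β.range = ⊤) (hα : IsPSeparable p α t₁)
    (hβ : IsPSeparable p β t₂) (hα_inj : Function.Injective α) (hβ_inj : Function.Injective β)
    (H : Type*) [Group H] : HasLifts α β t₁ t₂ H := by
  intro g₁ g₂ hg
  set K := (α.prod g₁).range ⊔ (β.prod g₂).range
  have hinj : Function.Injective (Prod.fst ∘ K.subtype) :=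
    (injective_iff_map_eq_one ((MonoidHom.fst F H).comp K.subtype)).2 fun k hk => Subtype.ext
      (eq_one_of_mem_sup_of_fst_eq_one hlift ht hgen hα hβ hα_inj hβ_inj hg k.2 hk)
  have hsurj : Function.Surjective (Prod.fst ∘ K.subtype) := by
    have hmap : K.map (MonoidHom.fst F H) = ⊤ := by
      rw [Subgroup.map_sup, MonoidHom.map_range, MonoidHom.map_range, MonoidHom.fst_comp_prod,
        MonoidHom.fst_comp_prod, hgen]
    intro v
    obtain ⟨k, hk, hkv⟩ : v ∈ K.map (MonoidHom.fst F H) := hmap ▸ Subgroup.mem_top v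
    exact ⟨⟨k, hk⟩, hkv⟩
  obtain ⟨h, hK⟩ := Subgroup.exists_eq_graph ⟨hinj, hsurj⟩
  have hgraph : K ≤ h.graph := hK.le
  exact ⟨h, MonoidHom.ext fun a => hgraph (Subgroup.mem_sup_left ⟨a, rfl⟩),
    MonoidHom.ext fun b => hgraph (Subgroup.mem_sup_right ⟨b, rfl⟩)⟩

end Words

/-! ### Adjoining roots -/

/-- The homomorphism from the infinite cyclic group, as a free group, that sends the generator
to `y`. -/
def unitHom {G : Type*} [Group G] (y : G) : FreeGroup Unit →* G :=
  FreeGroup.lift fun _ => y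

@[simp]
theorem unitHom_of {G : Type*} [Group G] (y : G) (u : Unit) : unitHom y (.of u) = y :=
  FreeGroup.lift_apply_of

theorem eq_of_zpow_exponentSum (b : FreeGroup Unit) : b = .of () ^ exponentSum () b :=
  map_eq_zpow_exponentSum (f := MonoidHom.id _) (fun _ h => absurd rfl h) b

theorem exists_int_lift {Z : Type*} {p : ℕ} [NeZero p]
    (χ : FreeGroup Z →* Multiplicative (ZMod p)) :
    ∃ χ' : FreeGroup Z →* Multiplicative ℤ, ∀ g, ((χ' g).toAdd : ZMod p) = (χ g).toAdd := by
  let χ' : FreeGroup Z →* Multiplicative ℤ :=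
    FreeGroup.lift fun z => .ofAdd ((χ (.of z)).toAdd.val : ℤ)
  have hχ' : (Int.castAddHom (ZMod p)).toMultiplicative.comp χ' = χ := by
    ext z
    simp [χ']
  exact ⟨χ', fun g => congrArg Multiplicative.toAdd (DFunLike.congr_fun hχ' g)⟩

theorem isPSeparable_unitHom {F : Type*} [Group F] {p : ℕ} [Fact p.Prime] {y : F}
    (hy : ∃ Q : PGroupHom p F, Q.hom y ≠ 1) : IsPSeparable p (unitHom y) (.of () ^ p) := by
  obtain ⟨Q, hQ⟩ := hy
  refine fun b hb => ⟨Q, fun ⟨k, hk⟩ => ?_⟩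
  set j := exponentSum () b
  have hbj : b = .of () ^ j := eq_of_zpow_exponentSum b
  have hpow : Q.hom y ^ (j - p * k) = 1 := by
    have hk' : (Q.hom y ^ p) ^ k = Q.hom y ^ j := by
      rw [hbj] at hk
      simpa using! hk
    rw [zpow_sub, ← hk', zpow_mul, zpow_natCast, mul_inv_cancel]
  have hdvd : (p : ℤ) ∣ j - p * k := by
    obtain ⟨e, he⟩ := IsPGroup.iff_orderOf.1 Q.isPGroup (Q.hom y)
    have he0 : e ≠ 0 := fun h => hQ (orderOf_eq_one_iff.1 (by rw [he, h, pow_zero]))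
    refine dvd_trans ?_ (orderOf_dvd_iff_zpow_eq_one.2 hpow)
    exact_mod_cast he ▸ dvd_pow_self p he0
  obtain ⟨i, hi⟩ := (dvd_sub_left (Dvd.intro k rfl)).1 hdvd
  exact hb ⟨i, by rw [hbj, hi, zpow_mul, zpow_natCast]⟩

namespace IsAmalgamQuotient

section TwoFactors

variable {X Y Z : Type} [Finite X] [Finite Y] {α : FreeGroup X →* FreeGroup Z}
  {β : FreeGroup Y →* FreeGroup Z} {t₁ : FreeGroup X} {t₂ : FreeGroup Y}

open scoped commutatorElement in
theorem isPSeparable_left (h : IsAmalgamQuotient α β t₁ t₂) (ht₁ : Indivisible t₁) (p : ℕ)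
    [Fact p.Prime] : IsPSeparable p α t₁ := by
  intro a ha
  have hcomm : α ⁅a, t₁⁆ ≠ 1 := fun hα => ha <| ht₁.mem_zpowers_of_commute <|
    commutatorElement_eq_one_iff_commute.1 <| (map_eq_one_iff α h.injective_left).1 hα
  obtain ⟨Q, hQ⟩ := exists_hom_ne_one p hcomm
  refine ⟨Q, fun ⟨k, hk⟩ => hQ ?_⟩
  rw [map_commutatorElement, map_commutatorElement, commutatorElement_eq_one_iff_commute, ← hk]
  exact (Commute.refl _).zpow_left k

theorem hasLifts_of_indivisible [Finite Z] (h : IsAmalgamQuotient α β t₁ t₂)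
    (ht₁ : Indivisible t₁) (ht₂ : Indivisible t₂) (H : Type*) [Group H] :
    HasLifts α β t₁ t₂ H := by
  obtain ⟨p, hp, hlift⟩ := h.exists_hasLifts_isPGroup
  have := Fact.mk hp
  exact hasLifts_of_forall_isPGroup hlift h.map_eq h.range_sup_range (h.isPSeparable_left ht₁ p)
    (h.swap.isPSeparable_left ht₂ p) h.injective_left h.injective_right H

variable {s : FreeGroup Y} {k a : ℕ} {κ : FreeGroup (Fin a) →* FreeGroup Z}
  {θ : FreeGroup (X ⊕ Unit) →* FreeGroup (Fin a)}

theorem card_eq_of_comp_eq_joint (h : IsAmalgamQuotient α β t₁ (s ^ k))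
    (hκ : Function.Injective κ) (hθ : Function.Surjective θ)
    (hκθ : κ.comp θ = joint α (unitHom (β s))) : a = Nat.card X := by
  have hs : s ≠ 1 := fun hs => h.right_ne_one (by rw [hs, one_pow])
  have hle : a ≤ Nat.card X + 1 := by simpa using card_le_of_surjective hθ
  have hne : a ≠ Nat.card X + 1 := fun ha => by
    have hinj : Function.Injective (joint α (unitHom (β s))) := by
      rw [← hκθ]
      exact hκ.comp (injective_of_surjective_of_card_le hθ (by simp [ha]))
    exact h.left_ne_one (eq_one_of_joint_injective (h := .of () ^ k) hinj (by simp [h.map_eq]))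
  have hge : Nat.card X ≤ a := by
    by_contra! hlt
    have hy : β s = κ (θ (.of (.inr ()))) := by
      rw [← MonoidHom.comp_apply, hκθ]
      simp [joint, gens]
    refine hs (eq_one_of_card_le ?_ ?_ hy)
    · have hα : α.range ≤ κ.range := by
        rw [← joint_comp_map_inl α (unitHom (β s)), ← hκθ, MonoidHom.comp_assoc]
        rintro _ ⟨g, rfl⟩
        exact ⟨_, rfl⟩
      rw [eq_top_iff, ← h.range_sup_range, sup_comm]
      exact sup_le_sup_left hα _
    · have := h.card_add_one
      simp only [Nat.card_fin]
      lia
  lia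

theorem exists_adjoin_root (hk : k ≠ 0) (h : IsAmalgamQuotient α β t₁ (s ^ k)) :
    ∃ (a : ℕ) (κ : FreeGroup (Fin a) →* FreeGroup Z) (α' : FreeGroup X →* FreeGroup (Fin a))
      (y : FreeGroup (Fin a)), κ.comp α' = α ∧
        IsAmalgamQuotient α' (unitHom y) t₁ (.of () ^ k) ∧ IsAmalgamQuotient κ β y s := by
  obtain ⟨a, κ, θ, hκ, hθ, hκθ⟩ := exists_comp_eq_of_freeGroup (joint α (unitHom (β s)))
  have ha := h.card_eq_of_comp_eq_joint hκ hθ hκθ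
  set α' := θ.comp (FreeGroup.map Sum.inl)
  set y := θ (.of (.inr ()))
  have hα' : κ.comp α' = α := by
    rw [← MonoidHom.comp_assoc, hκθ, joint_comp_map_inl]
  have hy : κ y = β s := by
    rw [← MonoidHom.comp_apply, hκθ]
    simp [joint, gens]
  have hs : s ≠ 1 := fun hs => h.right_ne_one (by rw [hs, one_pow])
  have hθ_eq : joint α' (unitHom y) = θ := by
    ext (x | u) <;> simp [joint, gens, α', y]
  refine ⟨a, κ, α', y, hα', ⟨by simp [ha], hκ ?_, h.left_ne_one, ?_, ?_⟩,
    ⟨?_, hy, fun hy1 => ?_, hs, ?_⟩⟩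
  · rw [← MonoidHom.comp_apply, hα', h.map_eq]
    simp [hy]
  · simpa using hk
  · rw [← range_joint, hθ_eq, MonoidHom.range_eq_top.2 hθ]
  · simpa [ha] using h.card_add_one
  · rw [hy1, map_one, eq_comm, map_eq_one_iff β h.injective_right] at hy
    exact hs hy
  · rw [eq_top_iff, ← h.range_sup_range, ← hα', MonoidHom.range_comp]
    exact sup_le_sup_right (Subgroup.map_le_range _ _) _

end TwoFactors

section Root

variable {X Z : Type} [Finite X] [Finite Z] {α : FreeGroup X →* FreeGroup Z} {y : FreeGroup Z}
  {t₁ : FreeGroup X} {p : ℕ} [Fact p.Prime]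

theorem exists_character_root_ne_one (h : IsAmalgamQuotient α (unitHom y) t₁ (.of () ^ p))
    (ht₁ : Indivisible t₁) :
    ∃ χ : FreeGroup Z →* Multiplicative (ZMod p), χ.comp α = 1 ∧ χ y ≠ 1 := by
  have hnot : ¬ PDense p (gens α (unitHom y) '' {.inr ()}ᶜ) := fun hdense => by
    obtain ⟨Q, hQ⟩ := ht₁.exists_hom_pow_ne p
    obtain ⟨f, -, hf⟩ := h.exists_hom_comp_left_eq hdense Q.isPGroup Q.hom
    refine hQ (f y) ?_
    rw [hf]
    simp [exponentSum]
  simp only [PDense, not_forall] at hnot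
  obtain ⟨χ, hχ, hχ1⟩ := hnot
  have hχα : χ.comp α = 1 := FreeGroup.ext_hom _ _ fun x => hχ _ ⟨.inl x, by simp, rfl⟩
  refine ⟨χ, hχα, fun hy => hχ1 (hom_ext_of_range_sup h.range_sup_range hχα ?_)⟩
  exact FreeGroup.ext_hom _ _ fun _ => by simp [hy]

/-- A character killing `X` but not `y` lifts to `ℤ`; if all exponent sums of `t₁` were divisible
by `p`, then the lift would be divisible by `p ^ 2` at `t₁ = y ^ p`. -/
theorem exists_not_dvd_exponentSum (h : IsAmalgamQuotient α (unitHom y) t₁ (.of () ^ p))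
    (ht₁ : Indivisible t₁) : ∃ x, ¬ (p : ℤ) ∣ exponentSum x t₁ := by
  have := Fintype.ofFinite X
  have hp : (p : ℤ) ≠ 0 := mod_cast (Fact.out : p.Prime).ne_zero
  obtain ⟨χ, hχα, hχy⟩ := h.exists_character_root_ne_one ht₁
  obtain ⟨χ', hχ'⟩ := exists_int_lift χ
  by_contra! hdvd
  have hsum : (p : ℤ) * (χ' y).toAdd = ∑ x, exponentSum x t₁ * (χ' (α (.of x))).toAdd := by
    have hprod := map_eq_prod_zpow_exponentSum (χ'.comp α) t₁
    rw [MonoidHom.comp_apply, h.map_eq, map_pow, unitHom_of, map_pow] at hprod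
    simpa using congrArg Multiplicative.toAdd hprod
  have hα : ∀ x, (p : ℤ) ∣ (χ' (α (.of x))).toAdd := fun x => by
    rw [← ZMod.intCast_zmod_eq_zero_iff_dvd, hχ']
    exact congrArg Multiplicative.toAdd (DFunLike.congr_fun hχα (.of x))
  have hy : (p : ℤ) ∣ (χ' y).toAdd := by
    rw [← mul_dvd_mul_iff_left hp, hsum]
    exact Finset.dvd_sum fun x _ => mul_dvd_mul (hdvd x) (hα x)
  rw [← ZMod.intCast_zmod_eq_zero_iff_dvd, hχ'] at hy
  exact hχy hy

theorem hasLifts_root (h : IsAmalgamQuotient α (unitHom y) t₁ (.of () ^ p))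
    (ht₁ : Indivisible t₁) (H : Type*) [Group H] :
    HasLifts α (unitHom y) t₁ (.of () ^ p) H := by
  obtain ⟨x, hx⟩ := h.exists_not_dvd_exponentSum ht₁
  have hy : y ≠ 1 := fun hy => FreeGroup.of_ne_one () <| h.injective_right (by simp [hy])
  exact hasLifts_of_forall_isPGroup (fun P _ _ hP => h.hasLifts_of_not_dvd hx hP) h.map_eq
    h.range_sup_range (h.isPSeparable_left ht₁ p) (isPSeparable_unitHom (exists_hom_ne_one p hy))
    h.injective_left h.injective_right H

theorem exists_hom_apply_root (h : IsAmalgamQuotient α (unitHom y) t₁ (.of () ^ p))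
    (ht₁ : Indivisible t₁) {H : Type*} [Group H] (g : FreeGroup X →* H) {r : H}
    (hr : g t₁ = r ^ p) : ∃ f : FreeGroup Z →* H, f.comp α = g ∧ f y = r := by
  obtain ⟨f, hfα, hfy⟩ := h.hasLifts_root ht₁ H g (unitHom r) (by simp [hr])
  exact ⟨f, hfα, by simpa using DFunLike.congr_fun hfy (.of ())⟩

theorem root_ne_pow (h : IsAmalgamQuotient α (unitHom y) t₁ (.of () ^ p))
    (ht₁ : Indivisible t₁) {q : ℕ} [Fact q.Prime] (w : FreeGroup Z) : w ^ q ≠ y := by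
  rintro rfl
  obtain rfl | hqp := eq_or_ne q p
  · obtain ⟨f, -, hf⟩ := h.exists_hom_apply_root ht₁ (1 : _ →* Multiplicative (ZMod q))
      (r := .ofAdd 1) (by simp [← ofAdd_nsmul])
    simpa using congrArg Multiplicative.toAdd hf
  · obtain ⟨Q, hQ⟩ := ht₁.exists_hom_pow_ne q
    have hcop : q.Coprime p := (Nat.coprime_primes Fact.out Fact.out).2 hqp
    obtain ⟨r, hr⟩ := (Q.isPGroup.powEquiv hcop).surjective (Q.hom t₁)
    obtain ⟨f, -, hf⟩ := h.exists_hom_apply_root ht₁ Q.hom (r := r) hr.symm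
    refine hQ (f w ^ p) ?_
    rw [pow_right_comm, ← map_pow, hf]
    exact hr

theorem indivisible_root (h : IsAmalgamQuotient α (unitHom y) t₁ (.of () ^ p))
    (ht₁ : Indivisible t₁) : Indivisible y := by
  intro u k hk
  by_contra hk1
  obtain ⟨q, hq, hqk⟩ := Nat.exists_prime_and_dvd (n := k.natAbs) (by lia)
  obtain ⟨d, rfl⟩ := Int.natCast_dvd.2 hqk
  have := Fact.mk hq
  exact h.root_ne_pow ht₁ (u ^ d) (by rw [← hk, mul_comm, zpow_mul, zpow_natCast])

end Root

theorem hasLifts_of_indivisible_pow {k : ℕ} {X Y Z : Type} [Finite X] [Finite Y] [Finite Z]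
    {α : FreeGroup X →* FreeGroup Z} {β : FreeGroup Y →* FreeGroup Z} {t₁ : FreeGroup X}
    {t₀ : FreeGroup Y} (h : IsAmalgamQuotient α β t₁ (t₀ ^ k)) (ht₁ : Indivisible t₁)
    (ht₀ : Indivisible t₀) (H : Type*) [Group H] : HasLifts α β t₁ (t₀ ^ k) H := by
  induction k using induction_on_primes generalizing X with
  | zero => exact absurd (pow_zero t₀) h.right_ne_one
  | one =>
    rw [pow_one] at h ⊢
    exact h.hasLifts_of_indivisible ht₁ ht₀ H
  | prime_mul p d hp ih =>
    have := Fact.mk hp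
    rw [mul_comm, pow_mul] at h ⊢
    obtain ⟨a, κ, α', y, hκ, hα', hβ⟩ := h.exists_adjoin_root hp.ne_zero
    intro g₁ g₂ hg
    obtain ⟨f₁, hf₁, hy⟩ := hα'.exists_hom_apply_root ht₁ g₁ (hg.trans (map_pow g₂ _ p))
    obtain ⟨f, hfκ, hfβ⟩ := ih hβ (hα'.indivisible_root ht₁) f₁ g₂ hy
    exact ⟨f, by rw [← hκ, ← MonoidHom.comp_assoc, hfκ, hf₁], hfβ⟩

theorem hasLifts {X Y Z : Type} [Finite X] [Finite Y] [Finite Z]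
    {α : FreeGroup X →* FreeGroup Z} {β : FreeGroup Y →* FreeGroup Z} {t₁ : FreeGroup X}
    {t₂ : FreeGroup Y} (h : IsAmalgamQuotient α β t₁ t₂)
    (hind : Indivisible t₁ ∨ Indivisible t₂) (H : Type*) [Group H] : HasLifts α β t₁ t₂ H := by
  obtain ht₁ | ht₂ := hind
  · obtain ⟨t₀, k, ht₀, rfl⟩ := exists_indivisible_pow_eq h.right_ne_one
    exact h.hasLifts_of_indivisible_pow ht₁ ht₀ H
  · obtain ⟨t₀, k, ht₀, rfl⟩ := exists_indivisible_pow_eq h.left_ne_one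
    exact (h.swap.hasLifts_of_indivisible_pow ht₂ ht₀ H).swap

end IsAmalgamQuotient

section Amalgam

variable {n m : ℕ} (t₁ : FreeGroup (Fin n)) (t₂ : FreeGroup (Fin m))

/-- The canonical map of the left factor to the amalgam. -/
def amalgamInl : FreeGroup (Fin n) →* Amalgam t₁ t₂ :=
  (QuotientGroup.mk' _).comp Monoid.Coprod.inl

/-- The canonical map of the right factor to the amalgam. -/
def amalgamInr : FreeGroup (Fin m) →* Amalgam t₁ t₂ :=
  (QuotientGroup.mk' _).comp Monoid.Coprod.inr

theorem amalgamInl_eq_amalgamInr : amalgamInl t₁ t₂ t₁ = amalgamInr t₁ t₂ t₂ := by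
  rw [← mul_inv_eq_one]
  exact (QuotientGroup.eq_one_iff _).2 (Subgroup.subset_normalClosure rfl)

theorem range_amalgamInl_sup_range_amalgamInr :
    (amalgamInl t₁ t₂).range ⊔ (amalgamInr t₁ t₂).range = ⊤ := by
  rw [amalgamInl, amalgamInr, ← Monoid.Coprod.range_eq, MonoidHom.range_eq_top]
  exact QuotientGroup.mk'_surjective _

variable {t₁ t₂}

theorem isAmalgamQuotient_of_surjective (h₁ : t₁ ≠ 1) (h₂ : t₂ ≠ 1)
    {ψ : Amalgam t₁ t₂ →* FreeGroup (Fin (n + m - 1))} (hψ : Function.Surjective ψ) :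
    IsAmalgamQuotient (ψ.comp (amalgamInl t₁ t₂)) (ψ.comp (amalgamInr t₁ t₂)) t₁ t₂ where
  card_add_one := by
    have hn : n ≠ 0 := by
      rintro rfl
      exact h₁ (Subsingleton.elim _ _)
    simp only [Nat.card_fin]
    lia
  map_eq := congrArg ψ (amalgamInl_eq_amalgamInr t₁ t₂)
  left_ne_one := h₁
  right_ne_one := h₂
  range_sup_range := by
    rw [MonoidHom.range_comp, MonoidHom.range_comp, ← Subgroup.map_sup,
      range_amalgamInl_sup_range_amalgamInr, ← MonoidHom.range_eq_map, MonoidHom.range_eq_top.2 hψ]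

end Amalgam

end Shenitzer

/-- Improved Shenitzer theorem: let `G = F₁ *_⟨t⟩ F₂` with `F₁, F₂` free of
ranks `n` and `m` and `t` a nontrivial element of both factors.  If `t` is
indivisible in at least one of the factors and `G` surjects onto a free group
of rank `n + m − 1`, then `G` is free of rank `n + m − 1`. -/
theorem improved_shenitzer (n m : ℕ)
    (t₁ : FreeGroup (Fin n)) (t₂ : FreeGroup (Fin m))
    (h₁ : t₁ ≠ 1) (h₂ : t₂ ≠ 1)
    (hind : Indivisible t₁ ∨ Indivisible t₂)
    (hcorank : ∃ ψ : Amalgam t₁ t₂ →* FreeGroup (Fin (n + m - 1)),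
      Function.Surjective ψ) :
    Nonempty (Amalgam t₁ t₂ ≃* FreeGroup (Fin (n + m - 1))) := by
  obtain ⟨ψ, hψ⟩ := hcorank
  obtain ⟨σ, hl, hr⟩ := (Shenitzer.isAmalgamQuotient_of_surjective h₁ h₂ hψ).hasLifts hind
    (Amalgam t₁ t₂) (Shenitzer.amalgamInl t₁ t₂) (Shenitzer.amalgamInr t₁ t₂)
    (Shenitzer.amalgamInl_eq_amalgamInr t₁ t₂)
  have hσψ : σ.comp ψ = MonoidHom.id _ :=
    Shenitzer.hom_ext_of_range_sup (Shenitzer.range_amalgamInl_sup_range_amalgamInr t₁ t₂) hl hr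
  have hinj : Function.Injective ψ :=
    Function.LeftInverse.injective (g := σ) (DFunLike.congr_fun hσψ)
  exact ⟨.ofBijective ψ ⟨hinj, hψ⟩⟩
end

section
/- In a free group F, an element γ is conjugate into a proper free factor of a splitting F = F₁ * ⟨α⟩ with α primitive if and only if γ either is conjugate to a power of α or conjugate into F₁; consequently, if G = F * ⟨s | s^k = γ⟩ with γ indivisible and G is free, then γ is a basis element of F. -/
/-- `x` is a basis (primitive) element of the group `F`. -/
def IsBasisElem {F : Type} [Group F] (x : F) : Prop :=
  ∃ s : Set F, x ∈ s ∧ Function.Bijective ⇑(FreeGroup.lift (Subtype.val : s → F))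

/-- `F` decomposes as the internal free product `F₁ * ⟨α⟩`: the natural map
from the abstract free product of the subgroups `F₁` and `⟨α⟩` to `F` is an
isomorphism. -/
def IsFreeDecomp {F : Type} [Group F] (F₁ : Subgroup F) (α : F) : Prop :=
  Function.Bijective
    ⇑(Monoid.Coprod.lift F₁.subtype (Subgroup.zpowers α).subtype)

/-- The group `⟨F, s | s^k = γ⟩`. -/
abbrev RootAdj {n : ℕ} (γ : FreeGroup (Fin n)) (k : ℕ) : Type :=
  (Monoid.Coprod (FreeGroup (Fin n)) (FreeGroup Unit)) ⧸
    Subgroup.normalClosure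
      {(Monoid.Coprod.inr (FreeGroup.of ())) ^ k * (Monoid.Coprod.inl γ)⁻¹}

/-!
Let `G = ⟨F, s | s ^ k = γ⟩` be free. The presentation map `F * ⟨s⟩ → G` then splits, and the Fox
derivative by `s`, corrected by the splitting and divided by `1 + s + ⋯ + s ^ (k - 1)`, restricts to
a crossed homomorphism on `F` with values in `ℤ[G]`. The companion matrix of `X ^ k - γ` represents
`s` over `ℤ[F]`; reading off matrix entries gives a crossed homomorphism `e : F → ℤ[F]` with
`e γ = 1`. The coefficients of `e` define a function `B : F → ℤ` which is almost invariant under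
right multiplication and which `γ` changes only at `1`: along each translate of the axis of `γ` in
the Cayley tree, the limits of `B` at the two ends agree, except for the axis through `1`.

Choose a basis of `F` in which `γ` is shortest. By Whitehead's inequality the Whitehead graph of `γ`
has no cut vertex. Far out in the tree `B` is locally constant, and the absence of a cut vertex
propagates this towards the root: `B` has one value at the ends of each branch that starts with a
given letter. These values agree along all edges of the Whitehead graph but one, and hence that edge
is a bridge. In a minimal Whitehead graph this forces `γ` to be a single letter.
-/

open Monoid.Coprod (inl inr)

/-! ### Crossed homomorphisms and Fox derivatives -/

theorem exists_section_of_isFreeGroup {H G : Type*} [Group H] [Group G] [IsFreeGroup G]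
    {q : H →* G} (hq : Function.Surjective q) : ∃ σ : G →* H, q.comp σ = .id G :=
  ⟨IsFreeGroup.lift fun x => Function.surjInv hq (IsFreeGroup.of x),
    IsFreeGroup.ext_hom fun x => by simp [Function.surjInv_eq]⟩

section CrossedHom

variable {H R M : Type*} [Group H] [Ring R] [AddCommGroup M] [Module R M]

/-- A crossed homomorphism `d : H → M` along `φ : H →* R`, that is, a derivation in the sense of
Fox calculus. -/
def IsCrossedHom (φ : H →* R) (d : H → M) : Prop :=
  ∀ x y, d (x * y) = d x + φ x • d y

namespace IsCrossedHom

variable {φ : H →* R} {d : H → M}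

theorem map_one (hd : IsCrossedHom φ d) : d 1 = 0 := by
  simpa using hd 1 1

theorem map_inv (hd : IsCrossedHom φ d) (x : H) : d x⁻¹ = -(φ x⁻¹ • d x) := by
  have h := hd x⁻¹ x
  rw [inv_mul_cancel, hd.map_one] at h
  exact eq_neg_of_add_eq_zero_left h.symm

theorem map_pow (hd : IsCrossedHom φ d) (x : H) (n : ℕ) :
    d (x ^ n) = (∑ i ∈ Finset.range n, φ x ^ i) • d x := by
  induction n with
  | zero => simp [hd.map_one]
  | succ n ih => rw [pow_succ, hd, ih, Finset.sum_range_succ, add_smul, _root_.map_pow]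

theorem map_conj (hd : IsCrossedHom φ d) (g : H) {x : H} (hx : φ x = 1) :
    d (g * x * g⁻¹) = φ g • d x := by
  have hg : φ g * φ g⁻¹ = 1 := by rw [← map_mul, mul_inv_cancel, _root_.map_one]
  rw [hd, hd, map_mul, hx, hd.map_inv, mul_one, smul_neg, smul_smul, hg, one_smul,
    add_neg_cancel_comm]

theorem sub {d' : H → M} (hd : IsCrossedHom φ d) (hd' : IsCrossedHom φ d') :
    IsCrossedHom φ (d - d') := fun x y => by
  simp only [Pi.sub_apply, hd x, hd' x, smul_sub]
  abel

theorem comp {K : Type*} [Group K] (hd : IsCrossedHom φ d) (f : K →* H) :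
    IsCrossedHom (φ.comp f) (d ∘ f) := fun x y => by
  simp only [Function.comp_apply, map_mul, hd (f x), MonoidHom.comp_apply]

theorem mem_of_mem_normalClosure (hd : IsCrossedHom φ d) (N : Submodule R M) {S : Set H}
    (hφ : ∀ x ∈ S, φ x = 1) (hS : ∀ x ∈ S, d x ∈ N) {x : H}
    (hx : x ∈ Subgroup.normalClosure S) : d x ∈ N := by
  let K : Subgroup H :=
    { carrier := {x | φ x = 1 ∧ d x ∈ N}
      one_mem' := ⟨φ.map_one, hd.map_one ▸ N.zero_mem⟩
      mul_mem' := fun {x y} hx hy =>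
        ⟨by rw [map_mul, hx.1, hy.1, mul_one], hd x y ▸ N.add_mem hx.2 (N.smul_mem _ hy.2)⟩
      inv_mem' := fun {x} hx =>
        ⟨by simpa [hx.1] using (φ.map_mul x x⁻¹).symm,
          hd.map_inv x ▸ N.neg_mem (N.smul_mem _ hx.2)⟩ }
  have : K.Normal :=
    ⟨fun x hx g => ⟨by rw [map_mul, map_mul, hx.1, mul_one, ← map_mul, mul_inv_cancel, φ.map_one],
      hd.map_conj g hx.1 ▸ N.smul_mem _ hx.2⟩⟩
  exact (Subgroup.normalClosure_le_normal (N := K) (fun y hy => ⟨hφ y hy, hS y hy⟩) hx).2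

theorem exists_mul_eq_of_section {G : Type*} [Group G] {q : H →* G} {σ : G →* H}
    (hσ : q.comp σ = .id G) {ψ : G →* R} {δ : H → R} (hδ : IsCrossedHom (ψ.comp q) δ) {c : R}
    (hc : ∀ a, a * c = 0 → a = 0) (hker : ∀ x ∈ q.ker, δ x ∈ Submodule.span R {c}) :
    ∃ b : H → R, IsCrossedHom (ψ.comp q) b ∧ ∀ x ∈ q.ker, b x * c = δ x := by
  have hqσ (x : G) : q (σ x) = x := DFunLike.congr_fun hσ x
  set D : H → R := δ - δ ∘ (σ.comp q)
  have hD : IsCrossedHom (ψ.comp q) D := by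
    refine hδ.sub ?_
    convert hδ.comp (σ.comp q) using 1
    ext x
    simp [hqσ]
  have hspan (x : H) : ∃ b, b * c = D x := by
    have hx : x * (σ (q x))⁻¹ ∈ q.ker := by simp [MonoidHom.mem_ker, hqσ]
    have hDx : D x = δ (x * (σ (q x))⁻¹) := by
      have h := hδ (x * (σ (q x))⁻¹) (σ (q x))
      rw [inv_mul_cancel_right, MonoidHom.comp_apply, MonoidHom.mem_ker.mp hx, ψ.map_one,
        one_smul] at h
      exact sub_eq_of_eq_add h
    exact hDx ▸ Submodule.mem_span_singleton.mp (hker _ hx)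
  choose b hb using hspan
  refine ⟨b, fun x y => sub_eq_zero.mp (hc _ ?_), fun x hx => ?_⟩
  · rw [sub_mul, add_mul, smul_eq_mul, mul_assoc, hb, hb, hb, hD x y, smul_eq_mul, sub_self]
  · simp [hb, D, MonoidHom.mem_ker.mp hx, hδ.map_one]

end IsCrossedHom

theorem exists_foxDerivative {A ι : Type*} [Group A]
    (φ : Monoid.Coprod A (FreeGroup ι) →* R) (m : ι → M) :
    ∃ d : Monoid.Coprod A (FreeGroup ι) → M, IsCrossedHom φ d ∧ (∀ a, d (inl a) = 0) ∧
      ∀ i, d (inr (FreeGroup.of i)) = m i := by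
  let act : Rˣ →* MulAut (Multiplicative M) :=
    (MulAutMultiplicative M).symm.toMonoidHom.comp (DistribMulAction.toAddAut Rˣ M)
  let Φ : Monoid.Coprod A (FreeGroup ι) →* Multiplicative M ⋊[act] Rˣ :=
    Monoid.Coprod.lift (SemidirectProduct.inr.comp (φ.toHomUnits.comp inl))
      (FreeGroup.lift fun i => ⟨.ofAdd (m i), φ.toHomUnits (inr (.of i))⟩)
  have hΦ : SemidirectProduct.rightHom.comp Φ = φ.toHomUnits := by
    ext x <;> simp [Φ, SemidirectProduct.rightHom]
  refine ⟨fun x => (Φ x).left.toAdd, fun x y => ?_, fun a => by simp [Φ], fun i => by simp [Φ]⟩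
  have hx : ((Φ x).right : R) = φ x := by
    rw [← φ.coe_toHomUnits, ← hΦ]
    rfl
  simp only [map_mul, SemidirectProduct.mul_left, toAdd_mul, ← hx]
  rfl

end CrossedHom

theorem eq_zero_of_mul_geomSum_eq_zero {R G : Type*} [Ring R] [Group G] {s : G}
    (hs : ¬IsOfFinOrder s) {k : ℕ} (hk : k ≠ 0) {a : MonoidAlgebra R G}
    (ha : a * ∑ i ∈ Finset.range k, MonoidAlgebra.of R G s ^ i = 0) : a = 0 := by
  have ha_mul : a * MonoidAlgebra.of R G (s ^ k) = a := by
    rw [map_pow, ← sub_eq_zero, ← mul_sub_one, ← geom_sum_mul, ← mul_assoc, ha, zero_mul]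
  have hperiod (g : G) (n : ℕ) : a.coeff (g * (s ^ k)⁻¹ ^ n) = a.coeff g := by
    induction n with
    | zero => simp
    | succ n ih =>
      conv_rhs => rw [← ih, ← ha_mul]
      rw [MonoidAlgebra.of_apply, MonoidAlgebra.coeff_mul_single_apply, mul_one, pow_succ,
        mul_assoc]
  by_contra hne
  obtain ⟨g, hg⟩ : ∃ g, a.coeff g ≠ 0 := by
    by_contra! h
    exact hne (MonoidAlgebra.ext (Finsupp.ext h))
  have hinj : Function.Injective fun n : ℕ => g * (s ^ k)⁻¹ ^ n :=
    (mul_right_injective g).comp <| injective_pow_iff_not_isOfFinOrder.mpr <| by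
      rwa [isOfFinOrder_inv_iff, isOfFinOrder_pow, or_iff_left hk]
  exact Set.infinite_of_injective_forall_mem hinj
    (fun n => by rwa [Finset.mem_coe, Finsupp.mem_support_iff, hperiod])
    a.coeff.support.finite_toSet

/-! ### Adjoining a root -/

section RootMatrix

variable {R : Type*} [Ring R] {m : ℕ}

/-- The companion matrix of `X ^ (m + 1) - u`, an `(m + 1)`-st root of the scalar matrix `u`. -/
def rootMatrix (u : R) (m : ℕ) : Matrix (Fin (m + 1)) (Fin (m + 1)) R :=
  Matrix.of (Fin.cons (Pi.single (Fin.last m) u) fun i => Pi.single i.castSucc 1)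

theorem rootMatrix_mul_zero (u : R) (W : Matrix (Fin (m + 1)) (Fin (m + 1)) R) :
    (rootMatrix u m * W) 0 = u • W (Fin.last m) := by
  rw [Matrix.mul_apply_eq_vecMul]
  exact Matrix.single_vecMul _ _ _

theorem rootMatrix_mul_succ (u : R) (W : Matrix (Fin (m + 1)) (Fin (m + 1)) R) (i : Fin m) :
    (rootMatrix u m * W) i.succ = W i.castSucc := by
  rw [Matrix.mul_apply_eq_vecMul]
  exact Matrix.single_one_vecMul _ _

theorem rootMatrix_pow_mul (u : R) (W : Matrix (Fin (m + 1)) (Fin (m + 1)) R) {i t : ℕ}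
    (h : i + t < m + 1) :
    (rootMatrix u m ^ t * W) ⟨i + t, h⟩ = W ⟨i, by lia⟩ := by
  induction t with
  | zero => simp
  | succ t ih =>
    rw [pow_succ', mul_assoc]
    exact (rootMatrix_mul_succ u _ ⟨i + t, by lia⟩).trans (ih (by lia))

theorem rootMatrix_pow (u : R) (m : ℕ) : rootMatrix u m ^ (m + 1) = Matrix.scalar _ u := by
  funext i
  have hsplit : rootMatrix u m ^ (m + 1) =
      rootMatrix u m ^ (i : ℕ) * (rootMatrix u m * rootMatrix u m ^ (m - i)) := by
    rw [← pow_succ', ← pow_add]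
    congr 1
    lia
  have hrow_i : (rootMatrix u m ^ (i : ℕ) * (rootMatrix u m * rootMatrix u m ^ (m - i))) i =
      (rootMatrix u m * rootMatrix u m ^ (m - i)) 0 := by
    simpa using rootMatrix_pow_mul u (rootMatrix u m * rootMatrix u m ^ (m - i))
      (show 0 + (i : ℕ) < m + 1 by lia)
  have hrow_last : (rootMatrix u m ^ (m - i)) (Fin.last m) =
      (1 : Matrix (Fin (m + 1)) (Fin (m + 1)) R) i := by
    have hlast : Fin.last m = ⟨i + (m - i), by lia⟩ := Fin.ext (by simp; lia)
    simpa [hlast] using rootMatrix_pow_mul u 1 (show (i : ℕ) + (m - i) < m + 1 by lia)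
  rw [hsplit, hrow_i, rootMatrix_mul_zero, hrow_last]
  ext j
  simp [Matrix.diagonal_apply, Matrix.one_apply]

theorem geomSum_rootMatrix_mul_apply_sub (u : R) (m : ℕ)
    (W : Matrix (Fin (m + 2)) (Fin (m + 2)) R) (j : Fin (m + 2)) :
    ((∑ i ∈ Finset.range (m + 2), rootMatrix u (m + 1) ^ i) * W) 0 j -
      ((∑ i ∈ Finset.range (m + 2), rootMatrix u (m + 1) ^ i) * W) 1 j = (u - 1) * W 1 j := by
  set V := (∑ i ∈ Finset.range (m + 2), rootMatrix u (m + 1) ^ i) * W with hV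
  have hmul : rootMatrix u (m + 1) * V - V = (Matrix.scalar _ u - 1) * W := by
    rw [← sub_one_mul, hV, ← mul_assoc, mul_geom_sum, rootMatrix_pow]
  have hshift : (rootMatrix u (m + 1) * V) 1 j = V 0 j :=
    congrFun (rootMatrix_mul_succ u V 0) j
  have h := congrFun₂ hmul 1 j
  rw [Matrix.sub_apply, hshift] at h
  simpa [sub_mul] using h

end RootMatrix

theorem exists_crossedHom_eq_geomSum_mul_sub_one {F G : Type*} [Group F] [Group G]
    [IsFreeGroup G] {γ : F} {k : ℕ} (hk : k ≠ 0) {q : Monoid.Coprod F (FreeGroup Unit) →* G}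
    (hq : Function.Surjective q)
    (hker : q.ker = Subgroup.normalClosure {inr (FreeGroup.of ()) ^ k * (inl γ)⁻¹})
    (hs : ¬IsOfFinOrder (q (inr (FreeGroup.of ())))) :
    ∃ (b : F → MonoidAlgebra ℤ G) (β : MonoidAlgebra ℤ G),
      IsCrossedHom ((MonoidAlgebra.of ℤ G).comp (q.comp inl)) b ∧
        b γ = (∑ i ∈ Finset.range k, MonoidAlgebra.of ℤ G (q (inr (FreeGroup.of ()))) ^ i) * β
          - 1 := by
  set N := ∑ i ∈ Finset.range k, MonoidAlgebra.of ℤ G (q (inr (FreeGroup.of ()))) ^ i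
  set s : Monoid.Coprod F (FreeGroup Unit) := inr (.of ())
  set r : Monoid.Coprod F (FreeGroup Unit) := s ^ k * (inl γ)⁻¹ with hr_def
  have hr : r ∈ q.ker := by
    rw [hker]
    exact Subgroup.subset_normalClosure rfl
  have hφr : ((MonoidAlgebra.of ℤ G).comp q) r = 1 := by
    rw [MonoidHom.comp_apply, MonoidHom.mem_ker.mp hr, map_one]
  have hN (a : MonoidAlgebra ℤ G) (ha : a * N = 0) : a = 0 :=
    eq_zero_of_mul_geomSum_eq_zero hs hk ha
  obtain ⟨σ, hσ⟩ := exists_section_of_isFreeGroup hq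
  obtain ⟨d, hd, hd_inl, hd_s⟩ :=
    exists_foxDerivative ((MonoidAlgebra.of ℤ G).comp q) fun _ : Unit => (1 : MonoidAlgebra ℤ G)
  have hdr : d r = N := by
    rw [hr_def, hd, ← map_inv, hd_inl, smul_zero, add_zero, hd.map_pow, hd_s, smul_eq_mul, mul_one]
    rfl
  obtain ⟨b, hb, hb_ker⟩ := IsCrossedHom.exists_mul_eq_of_section hσ hd hN fun x hx =>
    hd.mem_of_mem_normalClosure _ (by simpa only [Set.mem_singleton_iff, forall_eq] using hφr)
      (by simpa only [Set.mem_singleton_iff, forall_eq, hdr] using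
        Submodule.mem_span_singleton_self N) (hker ▸ hx)
  have hbr : b r = 1 :=
    sub_eq_zero.mp (hN _ (by rw [sub_mul, hb_ker r hr, hdr, one_mul, sub_self]))
  refine ⟨b ∘ inl, b s, hb.comp inl, eq_sub_of_add_eq' ?_⟩
  have h := hb r (inl γ)
  rw [inv_mul_cancel_right, hb.map_pow, hbr, hφr, one_smul] at h
  exact h.symm

/-- The group `⟨F, s | s ^ k = γ⟩` for an arbitrary group `F`. -/
abbrev RootAdjunction {F : Type*} [Group F] (γ : F) (k : ℕ) : Type _ :=
  Monoid.Coprod F (FreeGroup Unit) ⧸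
    Subgroup.normalClosure {inr (FreeGroup.of ()) ^ k * (inl γ)⁻¹}

namespace RootAdjunction

variable {F : Type*} [Group F] {γ : F} {k : ℕ}

/-- The canonical map from `F` to `⟨F, s | s ^ k = γ⟩`. -/
def of (γ : F) (k : ℕ) : F →* RootAdjunction γ k :=
  (QuotientGroup.mk' _).comp inl

/-- The adjoined root `s` in `⟨F, s | s ^ k = γ⟩`. -/
def root (γ : F) (k : ℕ) : RootAdjunction γ k :=
  QuotientGroup.mk' _ (inr (FreeGroup.of ()))

theorem exists_hom {A : Type*} [Monoid A] (f : F →* A) (t : A) (ht : t ^ k = f γ) (hk : k ≠ 0) :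
    ∃ ρ : RootAdjunction γ k →* A, (∀ x, ρ (of γ k x) = f x) ∧ ρ (root γ k) = t := by
  have hunit : IsUnit t := (isUnit_pow_iff hk).mp (ht ▸ (Group.isUnit γ).map f)
  let Φ : Monoid.Coprod F (FreeGroup Unit) →* Aˣ :=
    Monoid.Coprod.lift f.toHomUnits (FreeGroup.lift fun _ => hunit.unit)
  have hΦ : Subgroup.normalClosure {inr (FreeGroup.of ()) ^ k * (inl γ)⁻¹} ≤ Φ.ker := by
    refine Subgroup.normalClosure_le_normal (Set.singleton_subset_iff.mpr ?_)
    rw [SetLike.mem_coe, MonoidHom.mem_ker, map_mul, map_inv, mul_inv_eq_one]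
    ext
    simp [Φ, ht]
  exact ⟨(Units.coeHom A).comp (QuotientGroup.lift _ Φ hΦ), fun x => by simp [of, Φ],
    by simp [root, Φ]⟩

theorem exists_matrix_rep {R : Type*} [Ring R] (φ : F →* R) (m : ℕ) :
    ∃ ρ : RootAdjunction γ (m + 1) →* Matrix (Fin (m + 1)) (Fin (m + 1)) R,
      (∀ x, ρ (of γ (m + 1) x) = Matrix.scalar _ (φ x)) ∧
        ρ (root γ (m + 1)) = rootMatrix (φ γ) m :=
  exists_hom ((Matrix.scalar _ : R →+* Matrix (Fin (m + 1)) (Fin (m + 1)) R).toMonoidHom.comp φ)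
    _ (rootMatrix_pow _ m) m.succ_ne_zero

theorem root_ne_one (hk : 2 ≤ k) : root γ k ≠ 1 := by
  obtain ⟨m, rfl⟩ := Nat.exists_eq_add_of_le' hk
  obtain ⟨ρ, -, hρ⟩ := exists_matrix_rep (γ := γ) (1 : F →* ℤ) (m + 1)
  intro h
  have h00 := congrFun₂ (hρ.symm.trans (h ▸ ρ.map_one)) 0 0
  simp [rootMatrix, Fin.ext_iff] at h00

theorem not_isOfFinOrder_root [IsFreeGroup (RootAdjunction γ k)] (hk : 2 ≤ k) :
    ¬IsOfFinOrder (root γ k) := by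
  have : IsMulTorsionFree (RootAdjunction γ k) :=
    Function.Injective.isMulTorsionFree (IsFreeGroup.toFreeGroup _).toMonoidHom
      (IsFreeGroup.toFreeGroup _).injective
  exact not_isOfFinOrder_of_isMulTorsionFree (root_ne_one hk)

theorem exists_crossedHom_of [IsFreeGroup (RootAdjunction γ k)] (hk : 2 ≤ k) :
    ∃ (b : F → MonoidAlgebra ℤ (RootAdjunction γ k)) (β : MonoidAlgebra ℤ (RootAdjunction γ k)),
      IsCrossedHom ((MonoidAlgebra.of ℤ _).comp (of γ k)) b ∧
        b γ = (∑ i ∈ Finset.range k, MonoidAlgebra.of ℤ _ (root γ k) ^ i) * β - 1 :=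
  exists_crossedHom_eq_geomSum_mul_sub_one (by lia) (QuotientGroup.mk'_surjective _)
    (QuotientGroup.ker_mk' _) (not_isOfFinOrder_root hk)

theorem exists_crossedHom_eq_one [IsFreeGroup (RootAdjunction γ k)] (hk : 2 ≤ k) :
    ∃ e : F → MonoidAlgebra ℤ F, IsCrossedHom (MonoidAlgebra.of ℤ F) e ∧ e γ = 1 := by
  obtain ⟨b, β, hb, hbγ⟩ := exists_crossedHom_of (γ := γ) hk
  obtain ⟨m, rfl⟩ := Nat.exists_eq_add_of_le' hk
  obtain ⟨ρ, hρ_of, hρ_root⟩ := exists_matrix_rep (γ := γ) (MonoidAlgebra.of ℤ F) (m + 1)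
  let P := MonoidAlgebra.lift ℤ _ _ ρ
  have hP_of (x : RootAdjunction γ (m + 2)) : P (MonoidAlgebra.of ℤ _ x) = ρ x :=
    MonoidAlgebra.lift_of ..
  let T (a : MonoidAlgebra ℤ (RootAdjunction γ (m + 2))) := P a 0 0 - P a 1 0
  set c := P β 1 0
  have hT_γ : T (b γ) = (MonoidAlgebra.of ℤ F γ - 1) * c - 1 := by
    have h := geomSum_rootMatrix_mul_apply_sub (MonoidAlgebra.of ℤ F γ) m (P β) 0
    simp only [T, hbγ, map_sub, map_mul, map_sum, map_pow, hP_of, hρ_root, map_one,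
      Matrix.sub_apply, Matrix.one_apply_eq, Matrix.one_apply_ne one_ne_zero, sub_zero]
    rw [sub_right_comm, h]
  have hT : IsCrossedHom (MonoidAlgebra.of ℤ F) (T ∘ b) := fun x y => by
    simp only [Function.comp_apply, T, hb x, map_add, smul_eq_mul, map_mul,
      MonoidHom.comp_apply, hP_of, hρ_of, Matrix.add_apply, Matrix.scalar_apply,
      Matrix.diagonal_mul, mul_sub]
    abel
  have hc : IsCrossedHom (MonoidAlgebra.of ℤ F) fun x => (MonoidAlgebra.of ℤ F x - 1) * c :=
    fun x y => by simp only [map_mul, sub_mul, one_mul, smul_eq_mul, mul_sub, mul_assoc]; abel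
  exact ⟨_, hc.sub hT, by simp [hT_γ]⟩

end RootAdjunction

/-! ### Potentials -/

/-- An integer potential on `F`, for which right multiplication by each `x` changes only finitely
many values, and right multiplication by `γ` changes only the value at `1`, by one. -/
structure IsPotential {F : Type*} [Group F] (γ : F) (B : F → ℤ) : Prop where
  finite_mul_ne : ∀ x, {h | B (h * x) ≠ B h}.Finite
  map_self : B γ = B 1 + 1
  map_mul_self : ∀ h ≠ 1, B (h * γ) = B h

theorem IsCrossedHom.exists_isPotential {F : Type*} [Group F] {γ : F} {e : F → MonoidAlgebra ℤ F}
    (he : IsCrossedHom (MonoidAlgebra.of ℤ F) e) (hγ : e γ = 1) : ∃ B, IsPotential γ B := by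
  let B (h : F) := -(e h⁻¹).coeff h⁻¹
  have hB (h x : F) : B (h * x) = B h + (e x).coeff h⁻¹ := by
    have hx : e h⁻¹ = e x + MonoidAlgebra.of ℤ F x • e (x⁻¹ * h⁻¹) := by
      rw [← he, mul_inv_cancel_left]
    simp [B, hx, MonoidAlgebra.coeff_single_mul_apply]
  refine ⟨B, fun x => ?_, ?_, fun h hh => ?_⟩
  · refine ((e x).coeff.support.finite_toSet.preimage inv_injective.injOn).subset fun h hh => ?_
    simpa [hB] using hh
  · simpa [hγ] using hB 1 γ
  · simp [hB, hγ, MonoidAlgebra.one_def, hh]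

/-! ### Whitehead graphs of cyclic words -/

section Letters

variable {ι : Type*}

/-- The formal inverse of a letter of a free group. -/
def invLetter (a : ι × Bool) : ι × Bool := (a.1, !a.2)

@[simp] theorem invLetter_invLetter (a : ι × Bool) : invLetter (invLetter a) = a := by
  simp [invLetter]

theorem invLetter_ne_self (a : ι × Bool) : invLetter a ≠ a := by
  simp [invLetter, Prod.ext_iff]

theorem invLetter_injective : Function.Injective (invLetter (ι := ι)) :=
  Function.Involutive.injective invLetter_invLetter

theorem invLetter_eq_iff {a b : ι × Bool} : invLetter a = b ↔ a = invLetter b :=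
  Function.Involutive.eq_iff invLetter_invLetter

theorem fst_eq_fst_iff {a b : ι × Bool} : a.1 = b.1 ↔ a = b ∨ a = invLetter b := by
  rcases a with ⟨x, s⟩
  rcases b with ⟨z, t⟩
  cases s <;> cases t <;> simp [invLetter]

end Letters

section WhiteheadGraph

variable {ι : Type*} {l : ℕ}

/-- The number of occurrences of the generator `x` or its inverse in the cyclic word `y`. -/
noncomputable def occurrences (y : ZMod l → ι × Bool) (x : ι) : ℕ :=
  {j | (y j).1 = x}.ncard

/-- The Whitehead graph of the cyclic word `y` has an edge from `(y j)⁻¹` to `y (j + 1)` for each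
`j`; this is the number of its edges with exactly one end in `A`. -/
noncomputable def cutCount (y : ZMod l → ι × Bool) (A : Set (ι × Bool)) : ℕ :=
  {j | ¬(invLetter (y j) ∈ A ↔ y (j + 1) ∈ A)}.ncard

/-- No Whitehead automorphism shortens the cyclic word `y`, expressed as Whitehead's
inequality between vertex degrees and cuts of the Whitehead graph. -/
def IsWhiteheadMinimal (y : ZMod l → ι × Bool) : Prop :=
  ∀ (A : Set (ι × Bool)) (a : ι × Bool), a ∈ A → invLetter a ∉ A →
    occurrences y a.1 ≤ cutCount y A

variable {y : ZMod l → ι × Bool}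

theorem cutCount_le_one {A : Set (ι × Bool)} {i : ZMod l}
    (hcut : ∀ j ≠ i, (invLetter (y j) ∈ A ↔ y (j + 1) ∈ A)) : cutCount y A ≤ 1 :=
  have hsub : {j | ¬(invLetter (y j) ∈ A ↔ y (j + 1) ∈ A)} ⊆ {i} :=
    fun j hj => by_contra fun hne => hj (hcut j hne)
  (Set.ncard_le_ncard hsub).trans_eq (Set.ncard_singleton i)

theorem IsWhiteheadMinimal.invLetter_mem_iff (hy : IsWhiteheadMinimal y) {C : Set (ι × Bool)}
    {a : ι × Bool} (h : cutCount y C < occurrences y a.1) : invLetter a ∈ C ↔ a ∈ C := by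
  refine ⟨fun ha => by_contra fun ha' => ?_, fun ha => by_contra fun ha' => ?_⟩
  · exact (hy C (invLetter a) ha (by simpa using ha')).not_gt h
  · exact (hy C a ha ha').not_gt h

variable [NeZero l]

theorem occurrences_eq_add (y : ZMod l → ι × Bool) (a : ι × Bool) :
    occurrences y a.1 = {j | invLetter (y j) = a}.ncard + {j | y (j + 1) = a}.ncard := by
  have hshift : {j | y (j + 1) = a}.ncard = {j | y j = a}.ncard :=
    Set.ncard_preimage_of_injective_subset_range (f := (· + (1 : ZMod l))) (s := {j | y j = a})
      (add_left_injective 1) fun j _ => ⟨j - 1, sub_add_cancel j 1⟩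
  have hunion : {j | (y j).1 = a.1} = {j | invLetter (y j) = a} ∪ {j | y j = a} := by
    ext j
    rw [Set.mem_ofPred_eq, fst_eq_fst_iff, or_comm, ← invLetter_eq_iff]
    rfl
  have hdisj : Disjoint {j | invLetter (y j) = a} {j | y j = a} :=
    Set.disjoint_left.mpr fun j h₁ h₂ => invLetter_ne_self (y j) (h₁.trans h₂.symm)
  rw [occurrences, hunion, Set.ncard_union_eq hdisj (Set.toFinite _) (Set.toFinite _), hshift]

theorem cutCount_lt_occurrences {A : Set (ι × Bool)} {a : ι × Bool} {j : ZMod l}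
    (hcut : ∀ i, ¬(invLetter (y i) ∈ A ↔ y (i + 1) ∈ A) → invLetter (y i) = a ∨ y (i + 1) = a)
    (hj : invLetter (y j) ∈ A ↔ y (j + 1) ∈ A) (hja : invLetter (y j) = a ∨ y (j + 1) = a) :
    cutCount y A < occurrences y a.1 := by
  rw [occurrences_eq_add]
  refine (Set.ncard_lt_ncard (Set.ssubset_iff_exists.mpr ⟨hcut, j, hja, ?_⟩)
    (Set.toFinite _)).trans_le (Set.ncard_union_le _ _)
  exact not_not.mpr hj

theorem mem_iff_mem_zero {C : Set (ι × Bool)} (hinv : ∀ j, invLetter (y j) ∈ C ↔ y j ∈ C)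
    (hcut : ∀ j ≠ -1, (invLetter (y j) ∈ C ↔ y (j + 1) ∈ C)) (j : ZMod l) :
    y j ∈ C ↔ y 0 ∈ C := by
  suffices ∀ n < l, (y n ∈ C ↔ y 0 ∈ C) by
    simpa using this j.val j.val_lt
  intro n hn
  induction n with
  | zero => simp
  | succ n ih =>
    have hn_ne : (n : ZMod l) ≠ -1 := fun h => by
      have : ((n + 1 : ℕ) : ZMod l) = 0 := by rw [Nat.cast_succ, h, neg_add_cancel]
      exact absurd (Nat.le_of_dvd n.succ_pos ((ZMod.natCast_eq_zero_iff _ _).mp this)) hn.not_ge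
    rw [Nat.cast_succ, ← hcut n hn_ne, hinv, ih (by lia)]

namespace IsWhiteheadMinimal

theorem invLetter_ne_succ (hy : IsWhiteheadMinimal y) (j : ZMod l) :
    invLetter (y j) ≠ y (j + 1) := fun hj => by
  have hmin := hy {b | b ≠ invLetter (y j)} (y j) (invLetter_ne_self _).symm (by simp)
  refine (cutCount_lt_occurrences (a := invLetter (y j)) (j := j) (fun i hi => ?_) ?_
    (.inl rfl)).not_ge hmin
  · simp only [Set.mem_ofPred_eq] at hi
    tauto
  · rw [hj]

theorem length_eq_one_of_occurrences_le_one (hy : IsWhiteheadMinimal y) {j : ZMod l}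
    (hj : occurrences y (y j).1 ≤ 1) : l = 1 := by
  have huniq (i : ZMod l) (hi : (y i).1 = (y j).1) : i = j :=
    (Set.ncard_le_one (Set.toFinite _)).mp hj i hi j rfl
  by_contra hl
  have hsucc : (y (j + 1)).1 ≠ (y j).1 := fun h => by
    have h10 : (1 : ZMod l) = 0 := by simpa using huniq _ h
    exact hl (ZMod.one_eq_zero_iff.mp h10)
  have hmin := hy {y (j + 1), invLetter (y j)} (y (j + 1)) (by simp) <| by
    rintro (h | h)
    · exact invLetter_ne_self _ h
    · exact hsucc (fst_eq_fst_iff.mpr (.inl (invLetter_injective h)))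
  refine (cutCount_lt_occurrences (j := j) (fun i hi => ?_) (by simp) (.inr rfl)).not_ge hmin
  have hij : i ≠ j := by
    rintro rfl
    simp at hi
  have hi_left : invLetter (y i) ≠ invLetter (y j) :=
    fun h => hij (huniq i (fst_eq_fst_iff.mpr (.inl (invLetter_injective h))))
  have hi_right : y (i + 1) ≠ invLetter (y j) := fun h =>
    invLetter_ne_self (y j) (h.symm.trans (congrArg y (huniq _ (fst_eq_fst_iff.mpr (.inr h)))))
  simp only [Set.mem_insert_iff, Set.mem_singleton_iff, hi_left, hi_right, or_false] at hi
  tauto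

theorem length_eq_one_of_cut_edge (hy : IsWhiteheadMinimal y) {C : Set (ι × Bool)}
    (h0 : y 0 ∈ C) (hlast : invLetter (y (-1)) ∉ C)
    (hC : ∀ j ≠ -1, (invLetter (y j) ∈ C ↔ y (j + 1) ∈ C)) : l = 1 := by
  by_contra hl
  have hinv (j : ZMod l) : invLetter (y j) ∈ C ↔ y j ∈ C :=
    hy.invLetter_mem_iff <| (cutCount_le_one hC).trans_lt <| not_le.mp fun h =>
      hl (hy.length_eq_one_of_occurrences_le_one h)
  exact hlast ((hinv _).mpr ((mem_iff_mem_zero hinv hC _).mpr h0))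

theorem eq_empty_of_cut_vertex (hy : IsWhiteheadMinimal y) {C : Set (ι × Bool)} {p : ι × Bool}
    (hCS : ∀ c ∈ C, ∃ j, (y j).1 = c.1) (hpS : ∃ j, (y j).1 = p.1) (hp : p ∉ C)
    (hp' : invLetter p ∉ C)
    (hC : ∀ j, invLetter (y j) ≠ p → y (j + 1) ≠ p → (invLetter (y j) ∈ C ↔ y (j + 1) ∈ C)) :
    C = ∅ := by
  have hmin := hy (insert p C) p (Set.mem_insert _ _) (by simp [invLetter_ne_self, hp'])
  have hcut (j : ZMod l) : invLetter (y j) ∈ C ↔ y (j + 1) ∈ C := by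
    by_contra hj
    refine (cutCount_lt_occurrences (j := j) (fun i hi => ?_) ?_ ?_).not_ge hmin <;>
    grind
  have hcount : cutCount y C = 0 := by simp [cutCount, hcut]
  have hinv (j : ZMod l) : invLetter (y j) ∈ C ↔ y j ∈ C :=
    hy.invLetter_mem_iff <| hcount ▸ (Set.ncard_pos (Set.toFinite _)).mpr ⟨j, rfl⟩
  have hmem {a : ι × Bool} {j : ZMod l} (h : (y j).1 = a.1) : a ∈ C ↔ y 0 ∈ C := by
    rw [← mem_iff_mem_zero hinv (fun j _ => hcut j) j]
    rcases fst_eq_fst_iff.mp h.symm with rfl | rfl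
    exacts [Iff.rfl, hinv j]
  obtain ⟨i, hi⟩ := hpS
  refine Set.eq_empty_of_forall_notMem fun c hc => ?_
  obtain ⟨j, hj⟩ := hCS c hc
  exact hp ((hmem hi).mpr ((hmem hj).mp hc))

end IsWhiteheadMinimal

end WhiteheadGraph

/-! ### Whitehead automorphisms -/

section Segment

variable {Λ : Type*} {l : ℕ}

/-- The subword of length `m` of the cyclic word `y` that begins at position `i`, wrapping around
as often as necessary. -/
def cyclicSegment (y : ZMod l → Λ) (i : ZMod l) (m : ℕ) : List Λ :=
  (List.range m).map fun t : ℕ => y (i + t)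

variable (y : ZMod l → Λ) (i : ZMod l)

@[simp] theorem length_cyclicSegment (m : ℕ) : (cyclicSegment y i m).length = m := by
  simp [cyclicSegment]

theorem cyclicSegment_succ (m : ℕ) :
    cyclicSegment y i (m + 1) = cyclicSegment y i m ++ [y (i + m)] := by
  simp [cyclicSegment, List.range_succ]

theorem cyclicSegment_add (m n : ℕ) :
    cyclicSegment y i (m + n) = cyclicSegment y i m ++ cyclicSegment y (i + m) n := by
  simp [cyclicSegment, List.range_add, Function.comp_def, add_assoc]

theorem cyclicSegment_succ' (m : ℕ) :
    cyclicSegment y i (m + 1) = y i :: cyclicSegment y (i + 1) m := by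
  rw [add_comm m 1, cyclicSegment_add]
  simp [cyclicSegment]

theorem ncard_setOf_zmod_eq_count [NeZero l] (P : ZMod l → Prop) [DecidablePred P] :
    {j | P j}.ncard = Nat.count (fun n => P n) l := by
  have hinj : Set.InjOn (Nat.cast : ℕ → ZMod l) {n | n < l ∧ P n} := fun m hm n hn h => by
    rwa [ZMod.natCast_eq_natCast_iff', Nat.mod_eq_of_lt hm.1, Nat.mod_eq_of_lt hn.1] at h
  have himage : (Nat.cast : ℕ → ZMod l) '' {n | n < l ∧ P n} = {j | P j} := by
    ext j
    refine ⟨?_, fun hj => ⟨j.val, ⟨j.val_lt, by simpa using hj⟩, by simp⟩⟩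
    rintro ⟨n, hn, rfl⟩
    exact hn.2
  rw [← himage, hinj.ncard_image, Nat.count_eq_card_filter_range, ← Set.ncard_coe_finset]
  simp

end Segment

section WhiteheadAutomorphism

variable {ι : Type*} {l : ℕ}

theorem mk_singleton_invLetter (a : ι × Bool) :
    FreeGroup.mk [invLetter a] = (FreeGroup.mk [a])⁻¹ := by
  simp [invLetter, FreeGroup.invRev]

/-- The power of `a` by which the Whitehead automorphism `(A, a)` multiplies the letter `b` on the
left. -/
noncomputable def whiteheadFactor (A : Set (ι × Bool)) (a b : ι × Bool) : FreeGroup ι :=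
  A.mulIndicator (fun _ => FreeGroup.mk [a]) b

open Classical in
/-- The Whitehead automorphism `(A, a)`, as an endomorphism. -/
noncomputable def whiteheadHom (A : Set (ι × Bool)) (a : ι × Bool) :
    FreeGroup ι →* FreeGroup ι :=
  FreeGroup.lift fun x => if x = a.1 then FreeGroup.of x else
    whiteheadFactor A a (x, true) * FreeGroup.of x * (whiteheadFactor A a (x, false))⁻¹

variable (A : Set (ι × Bool)) (a : ι × Bool)

theorem whiteheadFactor_invLetter (b : ι × Bool) :
    whiteheadFactor A (invLetter a) b = (whiteheadFactor A a b)⁻¹ := by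
  simp only [whiteheadFactor, mk_singleton_invLetter, Set.mulIndicator_inv]

theorem whiteheadHom_of_fst : whiteheadHom A a (FreeGroup.of a.1) = FreeGroup.of a.1 := by
  simp [whiteheadHom]

theorem whiteheadHom_of_ne {x : ι} (hx : x ≠ a.1) : whiteheadHom A a (FreeGroup.of x) =
    whiteheadFactor A a (x, true) * FreeGroup.of x * (whiteheadFactor A a (x, false))⁻¹ := by
  simp [whiteheadHom, hx]

theorem mk_singleton_eq_or (b : ι × Bool) :
    FreeGroup.mk [b] = FreeGroup.of b.1 ∨ FreeGroup.mk [b] = (FreeGroup.of b.1)⁻¹ := by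
  rcases b with ⟨x, _ | _⟩
  exacts [.inr (mk_singleton_invLetter (x, true)), .inl rfl]

theorem whiteheadHom_mk_singleton_of_fst_eq {b : ι × Bool} (hb : b.1 = a.1) :
    whiteheadHom A a (FreeGroup.mk [b]) = FreeGroup.mk [b] := by
  rcases mk_singleton_eq_or b with h | h <;> simp [h, hb, whiteheadHom_of_fst]

theorem whiteheadHom_whiteheadFactor (b : ι × Bool) :
    whiteheadHom A a (whiteheadFactor A a b) = whiteheadFactor A a b := by
  by_cases hb : b ∈ A
  · simpa [whiteheadFactor, hb] using whiteheadHom_mk_singleton_of_fst_eq A a rfl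
  · simp [whiteheadFactor, hb]

theorem whiteheadHom_comp_invLetter :
    (whiteheadHom A a).comp (whiteheadHom A (invLetter a)) = .id (FreeGroup ι) := by
  ext x
  by_cases hx : x = a.1
  · subst hx
    exact (congrArg _ (whiteheadHom_of_fst A (invLetter a))).trans (whiteheadHom_of_fst A a)
  · rw [MonoidHom.comp_apply, whiteheadHom_of_ne A (invLetter a) hx, map_mul, map_mul, map_inv,
      whiteheadFactor_invLetter, whiteheadFactor_invLetter, map_inv, map_inv,
      whiteheadHom_whiteheadFactor, whiteheadHom_whiteheadFactor, whiteheadHom_of_ne A a hx]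
    simp [mul_assoc]

/-- The Whitehead automorphism `(A, a)`: it fixes `a` and multiplies every other letter `b` by `a`
on the left if `b ∈ A` and by `a⁻¹` on the right if `b⁻¹ ∈ A`. -/
noncomputable def whiteheadAut : FreeGroup ι ≃* FreeGroup ι :=
  (whiteheadHom A a).toMulEquiv (whiteheadHom A (invLetter a))
    (by simpa using whiteheadHom_comp_invLetter A (invLetter a)) (whiteheadHom_comp_invLetter A a)

theorem whiteheadAut_apply (g : FreeGroup ι) : whiteheadAut A a g = whiteheadHom A a g := rfl

variable {A a} [DecidableEq ι]

theorem whiteheadHom_mk_singleton (ha : a ∈ A) (ha' : invLetter a ∉ A) (b : ι × Bool) :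
    whiteheadHom A a (FreeGroup.mk [b]) = whiteheadFactor A a b *
      (if b.1 = a.1 then 1 else FreeGroup.mk [b]) * (whiteheadFactor A a (invLetter b))⁻¹ := by
  split_ifs with hb
  · rw [whiteheadHom_mk_singleton_of_fst_eq A a hb]
    rcases fst_eq_fst_iff.mp hb with rfl | rfl
    · simp [whiteheadFactor, ha, ha']
    · simp [whiteheadFactor, ha, ha', mk_singleton_invLetter]
  · rcases b with ⟨x, _ | _⟩
    · change whiteheadHom A a (FreeGroup.mk [invLetter (x, true)]) = _ *
        FreeGroup.mk [invLetter (x, true)] * (whiteheadFactor A a (x, true))⁻¹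
      rw [mk_singleton_invLetter, map_inv]
      exact (congrArg _ (whiteheadHom_of_ne A a hb)).trans (by group; rfl)
    · exact whiteheadHom_of_ne A a hb

open Classical in
theorem norm_whitehead_step_le (b b' : ι × Bool) :
    ((if b.1 = a.1 then 1 else FreeGroup.mk [b]) *
        ((whiteheadFactor A a (invLetter b))⁻¹ * whiteheadFactor A a b')).norm +
      (if b.1 = a.1 then 1 else 0) ≤ 1 + if ¬(invLetter b ∈ A ↔ b' ∈ A) then 1 else 0 := by
  have hsingle (c : ι × Bool) : (FreeGroup.mk [c]).norm ≤ 1 := FreeGroup.norm_mk_le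
  have hcore : (if b.1 = a.1 then 1 else FreeGroup.mk [b]).norm +
      (if b.1 = a.1 then 1 else 0) ≤ 1 := by
    split_ifs <;> simp [hsingle]
  have hfactor : ((whiteheadFactor A a (invLetter b))⁻¹ * whiteheadFactor A a b').norm ≤
      if ¬(invLetter b ∈ A ↔ b' ∈ A) then 1 else 0 := by
    by_cases hb : invLetter b ∈ A <;> by_cases hb' : b' ∈ A <;>
      simp [whiteheadFactor, hb, hb', hsingle, -FreeGroup.inv_mk]
  have hmul := FreeGroup.norm_mul_le (if b.1 = a.1 then 1 else FreeGroup.mk [b])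
    ((whiteheadFactor A a (invLetter b))⁻¹ * whiteheadFactor A a b')
  lia

open Classical in
theorem norm_whiteheadHom_cyclicSegment_add_count_le (ha : a ∈ A)
    (ha' : invLetter a ∉ A) (y : ZMod l → ι × Bool) (m : ℕ) :
    ((whiteheadFactor A a (y 0))⁻¹ * whiteheadHom A a (FreeGroup.mk (cyclicSegment y 0 m)) *
        whiteheadFactor A a (y m)).norm + Nat.count (fun n => (y n).1 = a.1) m ≤
      m + Nat.count (fun n => ¬(invLetter (y n) ∈ A ↔ y (n + 1) ∈ A)) m := by
  induction m with
  | zero => simp [cyclicSegment, ← FreeGroup.one_eq_mk]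
  | succ m ih =>
    have hsplit : (whiteheadFactor A a (y 0))⁻¹ *
        whiteheadHom A a (FreeGroup.mk (cyclicSegment y 0 (m + 1))) *
          whiteheadFactor A a (y (m + 1)) =
        (whiteheadFactor A a (y 0))⁻¹ * whiteheadHom A a (FreeGroup.mk (cyclicSegment y 0 m)) *
          whiteheadFactor A a (y m) * ((if (y m).1 = a.1 then 1 else FreeGroup.mk [y m]) *
            ((whiteheadFactor A a (invLetter (y m)))⁻¹ * whiteheadFactor A a (y (m + 1)))) := by
      rw [cyclicSegment_succ, zero_add, ← FreeGroup.mul_mk, map_mul,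
        whiteheadHom_mk_singleton ha ha']
      simp only [mul_assoc]
    rw [Nat.cast_succ, hsplit, Nat.count_succ, Nat.count_succ]
    have hstep := norm_whitehead_step_le (A := A) (a := a) (y m) (y (m + 1))
    refine (Nat.add_le_add_right (FreeGroup.norm_mul_le _ _) _).trans ?_
    lia

theorem isWhiteheadMinimal_of_forall_le_norm [NeZero l] {y : ZMod l → ι × Bool}
    (hy : ∀ φ : FreeGroup ι ≃* FreeGroup ι,
      l ≤ (φ (FreeGroup.mk (cyclicSegment y 0 l))).norm) : IsWhiteheadMinimal y := by
  classical
  intro A a ha ha'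
  have hmin := hy ((whiteheadAut A a).trans (MulAut.conj (whiteheadFactor A a (y 0))⁻¹))
  have hbound := norm_whiteheadHom_cyclicSegment_add_count_le ha ha' y l
  rw [ZMod.natCast_self] at hbound
  rw [MulEquiv.trans_apply, MulAut.conj_apply, inv_inv, whiteheadAut_apply] at hmin
  rw [occurrences, cutCount, ncard_setOf_zmod_eq_count, ncard_setOf_zmod_eq_count]
  lia

end WhiteheadAutomorphism

/-! ### Reduced words -/

section ReducedWords

open FreeGroup (IsReduced invRev)

variable {ι : Type*} {T : Set ι}

theorem fst_eq_imp_snd_eq_iff {a b : ι × Bool} : (a.1 = b.1 → a.2 = b.2) ↔ invLetter a ≠ b := by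
  rcases a with ⟨x, s⟩
  rcases b with ⟨z, t⟩
  cases s <;> cases t <;> simp [invLetter]

theorem isReduced_append_cons_cons {u v : List (ι × Bool)} {a b : ι × Bool} :
    IsReduced (u ++ a :: b :: v) ↔
      IsReduced (u ++ [a]) ∧ invLetter a ≠ b ∧ IsReduced (b :: v) := by
  simp only [FreeGroup.IsReduced, List.isChain_append_cons_cons, fst_eq_imp_snd_eq_iff]

theorem isReduced_invRev {u : List (ι × Bool)} (hu : IsReduced u) : IsReduced (invRev u) := by
  classical
  rw [FreeGroup.isReduced_iff_reduce_eq] at hu ⊢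
  rw [FreeGroup.reduce_invRev, hu]

theorem eq_of_mk_eq_mk {u v : List (ι × Bool)} (hu : IsReduced u) (hv : IsReduced v)
    (h : FreeGroup.mk u = FreeGroup.mk v) : u = v := by
  classical
  rw [← hu.reduce_eq, ← hv.reduce_eq, FreeGroup.reduce.sound h]

/-- Reduced words in the generators from `T` and their inverses. -/
def IsReducedOver (T : Set ι) (u : List (ι × Bool)) : Prop :=
  IsReduced u ∧ ∀ b ∈ u, b.1 ∈ T

theorem isReducedOver_singleton {b : ι × Bool} : IsReducedOver T [b] ↔ b.1 ∈ T := by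
  simp [IsReducedOver]

theorem isReducedOver_append_pair {u : List (ι × Bool)} {a b : ι × Bool} :
    IsReducedOver T (u ++ [a] ++ [b]) ↔
      IsReducedOver T (u ++ [a]) ∧ invLetter a ≠ b ∧ b.1 ∈ T := by
  have happend : u ++ [a] ++ [b] = u ++ [a, b] := by simp
  simp only [happend, IsReducedOver, isReduced_append_cons_cons, FreeGroup.IsReduced.singleton,
    List.forall_mem_append, List.forall_mem_cons, List.not_mem_nil, IsEmpty.forall_iff]
  tauto

namespace IsReducedOver

variable {u v : List (ι × Bool)}

theorem append_cons {b : ι × Bool} (hu : IsReducedOver T (u ++ [b]))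
    (hv : IsReducedOver T (b :: v)) : IsReducedOver T (u ++ b :: v) :=
  ⟨List.isChain_split.mpr ⟨hu.1, hv.1⟩,
    List.forall_mem_append.mpr ⟨(List.forall_mem_append.mp hu.2).1, hv.2⟩⟩

theorem of_prefix (hv : IsReducedOver T v) (huv : u <+: v) : IsReducedOver T u :=
  ⟨hv.1.infix huv.isInfix, fun b hb => hv.2 b (huv.subset hb)⟩

theorem invRev (hu : IsReducedOver T u) : IsReducedOver T (FreeGroup.invRev u) := by
  refine ⟨isReduced_invRev hu.1, fun b hb => ?_⟩
  obtain ⟨c, hc, rfl⟩ : ∃ c ∈ u, (c.1, !c.2) = b := by simpa [FreeGroup.invRev] using hb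
  exact hu.2 c hc

end IsReducedOver

variable {l : ℕ} {y : ZMod l → ι × Bool}

/-- The generators that occur in the cyclic word `y`, with either sign. -/
abbrev generatorSupport (y : ZMod l → ι × Bool) : Set ι :=
  Set.range fun j => (y j).1

theorem isReducedOver_cyclicSegment (hy : ∀ j, invLetter (y j) ≠ y (j + 1)) (i : ZMod l) (m : ℕ) :
    IsReducedOver (generatorSupport y) (cyclicSegment y i m) := by
  refine ⟨?_, by simp [cyclicSegment]⟩
  induction m generalizing i with
  | zero => exact FreeGroup.IsReduced.nil
  | succ m ih =>
    cases m with
    | zero => simp [cyclicSegment]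
    | succ m =>
      have htail := ih (i + 1)
      rw [cyclicSegment_succ'] at htail
      rw [cyclicSegment_succ', cyclicSegment_succ', FreeGroup.isReduced_cons_cons]
      exact ⟨fst_eq_imp_snd_eq_iff.mpr (hy i), htail⟩

theorem invRev_cyclicSegment_succ (y : ZMod l → ι × Bool) (i : ZMod l) (m : ℕ) :
    invRev (cyclicSegment y i (m + 1)) =
      invLetter (y (i + m)) :: invRev (cyclicSegment y i m) := by
  rw [cyclicSegment_succ, FreeGroup.invRev_append]
  rfl

theorem cyclicSegment_add_length_mul (y : ZMod l → ι × Bool) (i : ZMod l) (m n : ℕ) :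
    cyclicSegment y i (m * l + n) = cyclicSegment y i (m * l) ++ cyclicSegment y i n := by
  simp [cyclicSegment_add]

theorem mk_cyclicSegment_pow (y : ZMod l → ι × Bool) (m : ℕ) :
    FreeGroup.mk (cyclicSegment y 0 l) ^ m = FreeGroup.mk (cyclicSegment y 0 (m * l)) := by
  induction m with
  | zero => simp [cyclicSegment, FreeGroup.one_eq_mk]
  | succ m ih => rw [pow_succ, ih, FreeGroup.mul_mk, ← cyclicSegment_add_length_mul, add_one_mul]

theorem mk_cyclicSegment_mul_length (y : ZMod l → ι × Bool) (n m : ℕ) :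
    FreeGroup.mk (cyclicSegment y n (m * l)) = (FreeGroup.mk (cyclicSegment y 0 n))⁻¹ *
      FreeGroup.mk (cyclicSegment y 0 l) ^ m * FreeGroup.mk (cyclicSegment y 0 n) := by
  rw [mul_assoc, eq_inv_mul_iff_mul_eq, mk_cyclicSegment_pow, FreeGroup.mul_mk, FreeGroup.mul_mk,
    ← cyclicSegment_add_length_mul, add_comm, cyclicSegment_add, zero_add]

end ReducedWords

/-! ### Limits of potentials -/

namespace IsPotential

open Filter

variable {F : Type*} [Group F] {γ : F} {B : F → ℤ}

theorem le_map_mul_self (hB : IsPotential γ B) (h : F) : B h ≤ B (h * γ) := by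
  rcases eq_or_ne h 1 with rfl | hh
  · simp [hB.map_self]
  · exact (hB.map_mul_self h hh).ge

theorem monotone_mul_zpow (hB : IsPotential γ B) (h : F) : Monotone fun t : ℤ => B (h * γ ^ t) :=
  monotone_int_of_le_succ fun t => by
    rw [zpow_add_one, ← mul_assoc]
    exact hB.le_map_mul_self _

theorem not_isOfFinOrder (hB : IsPotential γ B) : ¬IsOfFinOrder γ := fun hγ => by
  obtain ⟨n, hn, hpow⟩ := isOfFinOrder_iff_pow_eq_one.mp hγ
  have hmono := hB.monotone_mul_zpow 1 (show (1 : ℤ) ≤ n by lia)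
  simp only [one_mul, zpow_one, zpow_natCast, hpow, hB.map_self] at hmono
  lia

theorem eventually_map_mul (hB : IsPotential γ B) {x : ℕ → F} (hx : Function.Injective x) (p : F) :
    ∀ᶠ n in atTop, B (x n * p) = B (x n) := by
  rw [← Nat.cofinite_eq_atTop, eventually_cofinite]
  exact (hB.finite_mul_ne p).preimage hx.injOn

theorem eventually_limits_eq (hB : IsPotential γ B) {h p : F} {a b : ℤ}
    (ha : ∀ᶠ n : ℕ in atTop, B (h * (γ ^ n)⁻¹ * p) = a)
    (hb : ∀ᶠ n : ℕ in atTop, B (h * γ ^ n * p) = b) :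
    ∀ᶠ n : ℕ in atTop, B (h * γ ^ (-n : ℤ)) = a ∧ B (h * γ ^ (n : ℤ)) = b := by
  have hinj := injective_pow_iff_not_isOfFinOrder.mpr hB.not_isOfFinOrder
  filter_upwards [ha, hb, hB.eventually_map_mul ((mul_right_injective h).comp hinj) p,
    hB.eventually_map_mul ((mul_right_injective h).comp (inv_injective.comp hinj)) p]
    with n han hbn hpos hneg
  simp only [Function.comp_apply] at hpos hneg
  rw [zpow_neg, zpow_natCast, ← hneg, ← hpos]
  exact ⟨han, hbn⟩

theorem limits_ne_iff_mem_zpowers (hB : IsPotential γ B) {h p : F} {a b : ℤ}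
    (ha : ∀ᶠ n : ℕ in atTop, B (h * (γ ^ n)⁻¹ * p) = a)
    (hb : ∀ᶠ n : ℕ in atTop, B (h * γ ^ n * p) = b) :
    a ≠ b ↔ h ∈ Subgroup.zpowers γ := by
  have hlim := hB.eventually_limits_eq ha hb
  refine ⟨fun hab => by_contra fun hh => hab ?_, ?_⟩
  · obtain ⟨n, rfl, rfl⟩ := hlim.exists
    have hconst (t : ℤ) : B (h * γ ^ (t + 1)) = B (h * γ ^ t) := by
      rw [zpow_add_one, ← mul_assoc]
      refine hB.map_mul_self _ fun h1 => hh ?_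
      exact eq_inv_of_mul_eq_one_left h1 ▸ inv_mem (Subgroup.zpow_mem_zpowers γ t)
    exact ((hB.monotone_mul_zpow h) (by lia)).antisymm
      (antitone_int_of_succ_le (f := fun t : ℤ => B (h * γ ^ t)) (fun t => (hconst t).le) (by lia))
  · rintro ⟨t, rfl⟩
    obtain ⟨n, ⟨rfl, rfl⟩, hn⟩ := (hlim.and (eventually_gt_atTop t.natAbs)).exists
    refine ne_of_lt ?_
    calc B (γ ^ t * γ ^ (-n : ℤ))
      _ ≤ B (γ ^ t * γ ^ (-t)) := hB.monotone_mul_zpow _ (by lia)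
      _ < B (γ ^ t * γ ^ (-t + 1)) := by simp [← zpow_add, hB.map_self]
      _ ≤ B (γ ^ t * γ ^ (n : ℤ)) := hB.monotone_mul_zpow _ (by lia)

end IsPotential

/-! ### Branches of the Cayley tree -/

section EndValue

open Filter

variable {ι : Type*} {T : Set ι} {B : FreeGroup ι → ℤ}

/-- `B` takes the value `c` at all reduced words over `T` of length at least `K` that begin with
`w`: in the Cayley tree, `B` is eventually constant on the ends in the branch below `w`. -/
def HasEndValue (T : Set ι) (K : ℕ) (B : FreeGroup ι → ℤ) (w : List (ι × Bool)) (c : ℤ) : Prop :=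
  ∀ u, IsReducedOver T u → w <+: u → K ≤ u.length → B (FreeGroup.mk u) = c

theorem exists_map_mk_append_singleton_eq (hT : T.Finite)
    (hB : ∀ x, {h | B (h * x) ≠ B h}.Finite) :
    ∃ K, ∀ u b, IsReducedOver T (u ++ [b]) → K ≤ u.length →
      B (FreeGroup.mk (u ++ [b])) = B (FreeGroup.mk u) := by
  classical
  have hletters : {b : ι × Bool | b.1 ∈ T}.Finite := by
    convert hT.prod (Set.finite_univ (α := Bool)) using 1
    ext
    simp
  have hfin := (hletters.biUnion fun b _ => hB (FreeGroup.mk [b])).image FreeGroup.norm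
  obtain ⟨K, hK⟩ := hfin.bddAbove
  refine ⟨K + 1, fun u b hub hu => by_contra fun hne => ?_⟩
  have hnorm : (FreeGroup.mk u).norm = u.length := by
    rw [FreeGroup.norm, FreeGroup.toWord_mk, (hub.of_prefix (List.prefix_append _ _)).1.reduce_eq]
  have hle : (FreeGroup.mk u).norm ≤ K := hK <| Set.mem_image_of_mem _ <|
    Set.mem_biUnion (show b.1 ∈ T from hub.2 b (by simp)) (by rwa [← FreeGroup.mul_mk] at hne)
  lia

theorem exists_forall_hasEndValue (hT : T.Finite) (hB : ∀ x, {h | B (h * x) ≠ B h}.Finite) :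
    ∃ K, ∀ w, K ≤ w.length → HasEndValue T K B w (B (FreeGroup.mk w)) := by
  obtain ⟨K, hK⟩ := exists_map_mk_append_singleton_eq hT hB
  refine ⟨K, fun w hw u hu hwu _ => ?_⟩
  obtain ⟨t, rfl⟩ := hwu
  induction t using List.reverseRecOn with
  | nil => simp
  | append_singleton t b ih =>
    rw [← List.append_assoc] at hu ⊢
    rw [hK _ _ hu (by rw [List.length_append]; lia)]
    exact ih (hu.of_prefix (List.prefix_append _ _)) (by rw [List.length_append]; lia)

theorem HasEndValue.of_forall_append_singleton {K : ℕ} {v : List (ι × Bool)} {c : ℤ}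
    (hv : v.length < K)
    (hchild : ∀ b, IsReducedOver T (v ++ [b]) → HasEndValue T K B (v ++ [b]) c) :
    HasEndValue T K B v c := by
  rintro u hu ⟨t, rfl⟩ hlen
  rcases t with _ | ⟨b, t⟩
  · rw [List.append_nil] at hlen
    lia
  · have hprefix : v ++ [b] <+: v ++ b :: t := ⟨t, by simp⟩
    exact hchild b (hu.of_prefix hprefix) _ hu hprefix hlen

theorem HasEndValue.eventually {K : ℕ} {v : List (ι × Bool)} {b : ι × Bool} {c : ℤ}
    (h : HasEndValue T K B (v ++ [b]) c) (hv : IsReducedOver T (v ++ [b]))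
    {w : ℕ → List (ι × Bool)} (hw : ∀ n, IsReducedOver T (w n)) (hlen : ∀ n, n ≤ (w n).length)
    (hhead : ∀ n ≠ 0, ∃ t, w n = b :: t) :
    ∀ᶠ n in atTop, B (FreeGroup.mk v * FreeGroup.mk (w n)) = c := by
  filter_upwards [eventually_ge_atTop K, eventually_ne_atTop 0] with n hKn hn
  obtain ⟨t, ht⟩ := hhead n hn
  have hw_n := hw n
  have hlen_n := hlen n
  rw [ht] at hw_n hlen_n ⊢
  exact h _ (hv.append_cons hw_n) ⟨t, by simp⟩ (by rw [List.length_append]; lia)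

end EndValue

section Branches

open Filter

variable {ι : Type*} {l : ℕ} {y : ZMod l → ι × Bool} {B : FreeGroup ι → ℤ} {K : ℕ}
  {v : List (ι × Bool)}

theorem mk_mul_inv_mem_zpowers_iff (hy : ∀ j, invLetter (y j) ≠ y (j + 1)) {n : ℕ} (hn : n < l)
    {T : Set ι} (hback : IsReducedOver T (v ++ [invLetter (y n)]))
    (hfwd : IsReducedOver T (v ++ [y (n + 1)])) :
    FreeGroup.mk v * (FreeGroup.mk (cyclicSegment y 0 (n + 1)))⁻¹ ∈
        Subgroup.zpowers (FreeGroup.mk (cyclicSegment y 0 l)) ↔ v = [] ∧ n + 1 = l := by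
  constructor
  · intro h
    obtain ⟨t, ht⟩ := Subgroup.mem_zpowers_iff.mp h
    have hv := (hback.of_prefix (List.prefix_append _ _)).1
    replace ht := (eq_mul_inv_iff_mul_eq.mp ht).symm
    cases t with
    | ofNat m =>
      rw [Int.ofNat_eq_natCast, zpow_natCast, mk_cyclicSegment_pow, FreeGroup.mul_mk,
        ← cyclicSegment_add_length_mul, ← add_assoc] at ht
      obtain rfl := eq_of_mk_eq_mk hv (isReducedOver_cyclicSegment hy _ _).1 ht
      rw [cyclicSegment_succ, isReducedOver_append_pair] at hback
      exact absurd (by simp) hback.2.1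
    | negSucc m =>
      obtain ⟨r, hr⟩ := Nat.exists_eq_add_of_le (show n + 1 ≤ (m + 1) * l by nlinarith)
      rw [zpow_negSucc, mk_cyclicSegment_pow, hr, cyclicSegment_add, ← FreeGroup.mul_mk,
        mul_inv_rev, inv_mul_cancel_right, FreeGroup.inv_mk] at ht
      obtain rfl := eq_of_mk_eq_mk hv (isReduced_invRev (isReducedOver_cyclicSegment hy _ _).1) ht
      cases r with
      | zero => exact ⟨rfl, by nlinarith⟩
      | succ r =>
        rw [cyclicSegment_succ', FreeGroup.invRev_cons] at hfwd
        exact absurd (by simp [invLetter]) (isReducedOver_append_pair.mp hfwd).2.1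
  · rintro ⟨rfl, rfl⟩
    rw [← FreeGroup.one_eq_mk, one_mul]
    exact inv_mem (Subgroup.mem_zpowers _)

namespace HasEndValue

variable [NeZero l] {n : ℕ} {a b : ℤ}

theorem eventually_forward (hy : ∀ j, invLetter (y j) ≠ y (j + 1))
    (hb : HasEndValue (generatorSupport y) K B (v ++ [y n]) b)
    (hv : IsReducedOver (generatorSupport y) (v ++ [y n])) :
    ∀ᶠ m : ℕ in atTop, B (FreeGroup.mk v * FreeGroup.mk (cyclicSegment y n (m * l))) = b := by
  refine hb.eventually hv (fun m => isReducedOver_cyclicSegment hy _ _) (fun m => ?_)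
    fun m hm => ?_
  · rw [length_cyclicSegment]
    exact Nat.le_mul_of_pos_right m (NeZero.pos l)
  · obtain ⟨r, hr⟩ := Nat.exists_eq_succ_of_ne_zero (mul_ne_zero hm (NeZero.ne l))
    exact ⟨_, by rw [hr, cyclicSegment_succ']⟩

theorem eventually_backward (hy : ∀ j, invLetter (y j) ≠ y (j + 1))
    (ha : HasEndValue (generatorSupport y) K B (v ++ [invLetter (y n)]) a)
    (hv : IsReducedOver (generatorSupport y) (v ++ [invLetter (y n)])) :
    ∀ᶠ m : ℕ in atTop,
      B (FreeGroup.mk v * (FreeGroup.mk (cyclicSegment y (n + 1) (m * l)))⁻¹) = a := by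
  simp only [FreeGroup.inv_mk]
  refine ha.eventually hv (fun m => (isReducedOver_cyclicSegment hy _ _).invRev) (fun m => ?_)
    fun m hm => ?_
  · rw [FreeGroup.invRev_length, length_cyclicSegment]
    exact Nat.le_mul_of_pos_right m (NeZero.pos l)
  · obtain ⟨r, hr⟩ := Nat.exists_eq_succ_of_ne_zero (mul_ne_zero hm (NeZero.ne l))
    have hlast : (n + 1 + r : ZMod l) = n := by
      have hmod : (m * l : ZMod l) = r + 1 := mod_cast congrArg (Nat.cast : ℕ → ZMod l) hr
      rw [ZMod.natCast_self, mul_zero] at hmod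
      linear_combination -hmod
    exact ⟨_, by rw [hr, invRev_cyclicSegment_succ, hlast]⟩

-- The two branches contain the two ends of the translate by `mk v * p⁻¹` of the axis of `y`, where
-- `p` is the word read along the axis up to the letter `y n`.
theorem ne_iff_mem_zpowers (hy : ∀ j, invLetter (y j) ≠ y (j + 1))
    (hB : IsPotential (FreeGroup.mk (cyclicSegment y 0 l)) B)
    (ha : HasEndValue (generatorSupport y) K B (v ++ [invLetter (y n)]) a)
    (hb : HasEndValue (generatorSupport y) K B (v ++ [y (n + 1)]) b)
    (hback : IsReducedOver (generatorSupport y) (v ++ [invLetter (y n)]))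
    (hfwd : IsReducedOver (generatorSupport y) (v ++ [y (n + 1)])) :
    a ≠ b ↔ FreeGroup.mk v * (FreeGroup.mk (cyclicSegment y 0 (n + 1)))⁻¹ ∈
      Subgroup.zpowers (FreeGroup.mk (cyclicSegment y 0 l)) := by
  have hmk (m : ℕ) := mk_cyclicSegment_mul_length y (n + 1) m
  rw [← Nat.cast_add_one] at hb hfwd
  refine hB.limits_ne_iff_mem_zpowers (p := FreeGroup.mk (cyclicSegment y 0 (n + 1))) ?_ ?_
  · filter_upwards [ha.eventually_backward hy hback] with m hm
    rw [← hm, ← Nat.cast_add_one, hmk, mul_inv_rev, mul_inv_rev, inv_inv]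
    simp only [mul_assoc]
  · filter_upwards [hb.eventually_forward hy hfwd] with m hm
    rw [← hm, hmk]
    simp only [mul_assoc]

theorem ne_iff (hy : ∀ j, invLetter (y j) ≠ y (j + 1))
    (hB : IsPotential (FreeGroup.mk (cyclicSegment y 0 l)) B) {j : ZMod l}
    (ha : HasEndValue (generatorSupport y) K B (v ++ [invLetter (y j)]) a)
    (hb : HasEndValue (generatorSupport y) K B (v ++ [y (j + 1)]) b)
    (hback : IsReducedOver (generatorSupport y) (v ++ [invLetter (y j)]))
    (hfwd : IsReducedOver (generatorSupport y) (v ++ [y (j + 1)])) :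
    a ≠ b ↔ v = [] ∧ j = -1 := by
  obtain ⟨n, hn, rfl⟩ : ∃ n < l, (n : ZMod l) = j := ⟨j.val, j.val_lt, j.natCast_zmod_val⟩
  have hlast : n + 1 = l ↔ (n : ZMod l) = -1 := by
    rw [eq_neg_iff_add_eq_zero, ← Nat.cast_add_one, ZMod.natCast_eq_zero_iff]
    exact ⟨fun h => h ▸ dvd_rfl, fun h => le_antisymm hn (Nat.le_of_dvd n.succ_pos h)⟩
  rw [ne_iff_mem_zpowers hy hB ha hb hback hfwd, mk_mul_inv_mem_zpowers_iff hy hn hback hfwd, hlast]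

end HasEndValue

variable [NeZero l]

-- The branch contains whole translates of the axis, which make the end values below `v ++ [q]`
-- constant on the components of the Whitehead graph with the vertex `q⁻¹` removed.
theorem exists_hasEndValue_of_children (hy : IsWhiteheadMinimal y)
    (hB : IsPotential (FreeGroup.mk (cyclicSegment y 0 l)) B) {q : ι × Bool}
    (hv : IsReducedOver (generatorSupport y) (v ++ [q])) (hlen : (v ++ [q]).length < K)
    (hchild : ∀ b, IsReducedOver (generatorSupport y) (v ++ [q] ++ [b]) →
      ∃ c, HasEndValue (generatorSupport y) K B (v ++ [q] ++ [b]) c) :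
    ∃ c, HasEndValue (generatorSupport y) K B (v ++ [q]) c := by
  have hreduced {b : ι × Bool} (hb : b ≠ invLetter q) (hbS : b.1 ∈ generatorSupport y) :
      IsReducedOver (generatorSupport y) (v ++ [q] ++ [b]) :=
    isReducedOver_append_pair.mpr ⟨hv, hb.symm, hbS⟩
  choose! c hc using hchild
  have hempty : {b | b.1 ∈ generatorSupport y ∧ b ≠ invLetter q ∧ c b ≠ c q} = ∅ := by
    refine hy.eq_empty_of_cut_vertex (p := invLetter q) (fun b hb => hb.1)
      (hv.2 q (by simp)) (by simp) (by simp) fun j hj hj' => ?_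
    have hbackS : (invLetter (y j)).1 ∈ generatorSupport y := ⟨j, rfl⟩
    have hfwdS : (y (j + 1)).1 ∈ generatorSupport y := ⟨j + 1, rfl⟩
    have hback := hreduced hj hbackS
    have hfwd := hreduced hj' hfwdS
    have hceq : c (invLetter (y j)) = c (y (j + 1)) := by
      by_contra hne
      simpa using (HasEndValue.ne_iff hy.invLetter_ne_succ hB (hc _ hback) (hc _ hfwd) hback
        hfwd).mp hne
    simp only [Set.mem_ofPred_eq, hbackS, hfwdS, hj, hj', hceq, ne_eq, not_false_eq_true, true_and]
  refine ⟨c q, .of_forall_append_singleton hlen fun b hb => ?_⟩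
  obtain ⟨-, hbq, hbS⟩ := isReducedOver_append_pair.mp hb
  have hcb : c b = c q := by
    by_contra hne
    exact Set.eq_empty_iff_forall_notMem.mp hempty b ⟨hbS, hbq.symm, hne⟩
  exact hcb ▸ hc b hb

theorem exists_hasEndValue_append_singleton (hy : IsWhiteheadMinimal y)
    (hB : IsPotential (FreeGroup.mk (cyclicSegment y 0 l)) B)
    (hK : ∀ w, K ≤ w.length → HasEndValue (generatorSupport y) K B w (B (FreeGroup.mk w)))
    (v : List (ι × Bool)) (q : ι × Bool) (hv : IsReducedOver (generatorSupport y) (v ++ [q])) :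
    ∃ c, HasEndValue (generatorSupport y) K B (v ++ [q]) c := by
  rcases le_or_gt K (v ++ [q]).length with hlen | hlen
  · exact ⟨_, hK _ hlen⟩
  · exact exists_hasEndValue_of_children hy hB hv hlen fun b hb =>
      exists_hasEndValue_append_singleton hy hB hK _ b hb
termination_by K - (v ++ [q]).length
decreasing_by
  rw [List.length_append (bs := [b]), List.length_singleton]
  lia

theorem IsWhiteheadMinimal.length_eq_one_of_isPotential (hy : IsWhiteheadMinimal y)
    (hB : IsPotential (FreeGroup.mk (cyclicSegment y 0 l)) B) : l = 1 := by
  obtain ⟨K, hK⟩ := exists_forall_hasEndValue (T := generatorSupport y) (Set.finite_range _)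
    hB.finite_mul_ne
  have hletter {b : ι × Bool} (hb : b.1 ∈ generatorSupport y) :
      IsReducedOver (generatorSupport y) ([] ++ [b]) :=
    isReducedOver_singleton.mpr hb
  have hexists (b : ι × Bool) (hb : b.1 ∈ generatorSupport y) :=
    exists_hasEndValue_append_singleton hy hB hK [] b (hletter hb)
  choose! c hc using hexists
  have hne (j : ZMod l) : c (invLetter (y j)) ≠ c (y (j + 1)) ↔ j = -1 := by
    have hback : (invLetter (y j)).1 ∈ generatorSupport y := ⟨j, rfl⟩
    have hfwd : (y (j + 1)).1 ∈ generatorSupport y := ⟨j + 1, rfl⟩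
    simpa using HasEndValue.ne_iff hy.invLetter_ne_succ hB (hc _ hback) (hc _ hfwd)
      (hletter hback) (hletter hfwd)
  refine hy.length_eq_one_of_cut_edge (C := {b | c b = c (y 0)}) rfl ?_ fun j hj => ?_
  · simpa using (hne (-1)).mpr rfl
  · rw [Set.mem_ofPred_eq, Set.mem_ofPred_eq, not_ne_iff.mp ((hne j).not.mpr hj)]

end Branches

/-! ### Basis elements -/

theorem isBasisElem_map_of {F : Type} [Group F] {ι : Type*} (e : FreeGroup ι ≃* F) (x : ι) :
    IsBasisElem (e (FreeGroup.of x)) := by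
  have hinj : Function.Injective fun i => e (FreeGroup.of i) :=
    e.injective.comp FreeGroup.of_injective
  refine ⟨Set.range fun i => e (FreeGroup.of i), ⟨x, rfl⟩, ?_⟩
  let ε := FreeGroup.freeGroupCongr (Equiv.ofInjective _ hinj)
  have hlift : (FreeGroup.lift Subtype.val).comp ε.toMonoidHom = e.toMonoidHom := by
    ext i
    simp [ε]
  rw [← Function.Bijective.of_comp_iff _ ε.bijective]
  convert e.bijective using 1
  exact congrArg DFunLike.coe hlift

theorem exists_mulEquiv_map_of_eq_mk {ι : Type*} (b : ι × Bool) :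
    ∃ e : FreeGroup ι ≃* FreeGroup ι, e (FreeGroup.of b.1) = FreeGroup.mk [b] := by
  rcases b with ⟨x, _ | _⟩
  · let inverting : FreeGroup ι →* FreeGroup ι := FreeGroup.lift fun i => (FreeGroup.of i)⁻¹
    have hinvol : inverting.comp inverting = .id _ := by
      ext i
      simp [inverting]
    exact ⟨inverting.toMulEquiv inverting hinvol hinvol,
      show inverting (FreeGroup.of x) = (FreeGroup.of x)⁻¹ from FreeGroup.lift_apply_of⟩
  · exact ⟨.refl _, rfl⟩

theorem IsPotential.comp_symm {F H : Type*} [Group F] [Group H] {γ : F} {B : F → ℤ}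
    (hB : IsPotential γ B) (ψ : F ≃* H) : IsPotential (ψ γ) (B ∘ ψ.symm) where
  finite_mul_ne x := by
    simpa using (hB.finite_mul_ne (ψ.symm x)).preimage ψ.symm.injective.injOn
  map_self := by simpa using hB.map_self
  map_mul_self h hh := by simpa using hB.map_mul_self (ψ.symm h) (by simpa using hh)

theorem exists_cyclicSegment_eq {Λ : Type*} (w : List Λ) [NeZero w.length] :
    ∃ y : ZMod w.length → Λ, cyclicSegment y 0 w.length = w := by
  refine ⟨fun j => w[j.val]'j.val_lt, List.ext_getElem (length_cyclicSegment ..) fun i _ hi => ?_⟩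
  simp [cyclicSegment, Nat.mod_eq_of_lt hi]

theorem exists_mk_singleton_of_forall_norm_le {ι : Type*} [DecidableEq ι] {g : FreeGroup ι}
    (hmin : ∀ φ : FreeGroup ι ≃* FreeGroup ι, g.norm ≤ (φ g).norm) {B : FreeGroup ι → ℤ}
    (hB : IsPotential g B) : ∃ b, g = FreeGroup.mk [b] := by
  have hne : g ≠ 1 := fun h => hB.not_isOfFinOrder (h ▸ IsOfFinOrder.one)
  have : NeZero g.toWord.length := ⟨mt FreeGroup.norm_eq_zero.mp hne⟩
  obtain ⟨y, hy⟩ := exists_cyclicSegment_eq g.toWord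
  have hmk : FreeGroup.mk (cyclicSegment y 0 g.toWord.length) = g := by rw [hy, FreeGroup.mk_toWord]
  have hminimal : IsWhiteheadMinimal y :=
    isWhiteheadMinimal_of_forall_le_norm fun φ => by rw [hmk]; exact hmin φ
  have hlen := hminimal.length_eq_one_of_isPotential (hmk.symm ▸ hB)
  obtain ⟨b, hb⟩ := List.length_eq_one_iff.mp hlen
  exact ⟨b, by rw [← hb, FreeGroup.mk_toWord]⟩

theorem IsPotential.isBasisElem {F : Type} [Group F] [IsFreeGroup F] {γ : F} {B : F → ℤ}
    (hB : IsPotential γ B) : IsBasisElem γ := by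
  classical
  have : Nonempty (F ≃* FreeGroup (IsFreeGroup.Generators F)) := ⟨IsFreeGroup.toFreeGroup F⟩
  let length (ψ : F ≃* FreeGroup (IsFreeGroup.Generators F)) := (ψ γ).norm
  set ψ := Function.argmin length
  obtain ⟨b, hb⟩ := exists_mk_singleton_of_forall_norm_le
    (fun φ => Function.argmin_le length (ψ.trans φ)) (hB.comp_symm ψ)
  obtain ⟨e, he⟩ := exists_mulEquiv_map_of_eq_mk b
  have hγ : (e.trans ψ.symm) (FreeGroup.of b.1) = γ := by
    rw [MulEquiv.trans_apply, he, ← hb, ψ.symm_apply_apply]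
  exact hγ ▸ isBasisElem_map_of _ b.1

theorem isBasisElem_of_isFreeGroup_rootAdjunction {F : Type} [Group F] [IsFreeGroup F] {γ : F}
    {k : ℕ} [IsFreeGroup (RootAdjunction γ k)] (hk : 2 ≤ k) : IsBasisElem γ := by
  obtain ⟨e, he, heγ⟩ := RootAdjunction.exists_crossedHom_eq_one (γ := γ) hk
  obtain ⟨B, hB⟩ := he.exists_isPotential heγ
  exact hB.isBasisElem

theorem exists_conj_mem_or_mem_zpowers_iff {F : Type*} [Group F] (F₁ : Subgroup F) (α γ : F) :
    (∃ g, g * γ * g⁻¹ ∈ F₁ ∨ g * γ * g⁻¹ ∈ Subgroup.zpowers α) ↔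
      (∃ (g : F) (k : ℤ), g * γ * g⁻¹ = α ^ k) ∨ ∃ g, g * γ * g⁻¹ ∈ F₁ := by
  simp only [Subgroup.mem_zpowers_iff, exists_or, or_comm, eq_comm]

theorem conjugate_into_factor_and_root_free_general {F : Type} [Group F] :
    (∀ (F₁ : Subgroup F) (α γ : F),
      (∃ g, g * γ * g⁻¹ ∈ F₁ ∨ g * γ * g⁻¹ ∈ Subgroup.zpowers α) ↔
        (∃ (g : F) (k : ℤ), g * γ * g⁻¹ = α ^ k) ∨ ∃ g, g * γ * g⁻¹ ∈ F₁) ∧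
    (∀ [IsFreeGroup F] (γ : F) (k : ℕ), 2 ≤ k →
      IsFreeGroup (RootAdjunction γ k) → IsBasisElem γ) :=
  ⟨exists_conj_mem_or_mem_zpowers_iff, fun _ _ hk _ => isBasisElem_of_isFreeGroup_rootAdjunction hk⟩

/-- In a free group `F` with a splitting `F = F₁ * ⟨α⟩`, `α` primitive, an
element `γ` is conjugate into a proper free factor of the splitting iff it is
conjugate to a power of `α` or conjugate into `F₁`.  Consequently, if
`G = ⟨F, s | s^k = γ⟩` with `γ` indivisible (not a proper power), `k ≥ 2`, and
`G` is free, then `γ` is a basis element of `F`. -/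
theorem conjugate_into_factor_and_root_free (n : ℕ) :
    (∀ (F₁ : Subgroup (FreeGroup (Fin n))) (α : FreeGroup (Fin n)),
      IsBasisElem α → IsFreeDecomp F₁ α →
      ∀ γ : FreeGroup (Fin n),
        ((∃ g, g * γ * g⁻¹ ∈ F₁ ∨ g * γ * g⁻¹ ∈ Subgroup.zpowers α) ↔
          ((∃ (g : FreeGroup (Fin n)) (k : ℤ), g * γ * g⁻¹ = α ^ k) ∨
            ∃ g, g * γ * g⁻¹ ∈ F₁))) ∧
    (∀ (γ : FreeGroup (Fin n)) (k : ℕ), 2 ≤ k →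
      (∀ (u : FreeGroup (Fin n)) (j : ℕ), 2 ≤ j → u ^ j ≠ γ) →
      IsFreeGroup (RootAdj γ k) → IsBasisElem γ) :=
  ⟨fun F₁ α _ _ => conjugate_into_factor_and_root_free_general.1 F₁ α,
    fun γ k hk _ => conjugate_into_factor_and_root_free_general.2 γ k hk⟩
end
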